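/- arXiv:1307.0676 — 2 statements merged into one kernel-verified Lean document; each statement's English description precedes it below -/
import Mathlib

section
/- Let 0 → A → B → C → 0 be a non-split short exact sequence of Λ-modules in which A and C are indecomposable Cohen–Macaulay Λ-modules. Then either there exist indices 1 ≤ s < s' < t < t' ≤ n with A ≅ (s,t), B ≅ (s,t') ⊕ (s',t) and C ≅ (s',t'), or there exist indices 1 ≤ s' < s < t' < t ≤ n with A ≅ (s,t), B ≅ (s',s) ⊕ (t',t) and C ≅ (s',t'). -/
set_option synthInstance.maxHeartbeats 1000000
set_option maxHeartbeats 1000000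

open Polynomial Matrix

noncomputable section

/-- The exponent `c_{ij}` (with 0-based indices `i j : Fin n`, corresponding to the 1-based
`c_{i+1,j+1} = δ_{i+1>j+1} + δ_{i+1>j+2} − δ_{(i+1,j+1)=(1,n)}`). -/
def cExp (n : ℕ) (i j : Fin n) : ℤ :=
  (if (j : ℕ) < (i : ℕ) then 1 else 0) + (if (j : ℕ) + 1 < (i : ℕ) then 1 else 0)
    - (if (i : ℕ) = 0 ∧ (j : ℕ) = n - 1 then 1 else 0)

/-- The subset `x^c · K[x]` of `K(x)`. -/
def xPow (K : Type*) [Field K] (c : ℤ) : Set (RatFunc K) :=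
  {f | ∃ p : Polynomial K, f = RatFunc.X ^ c * algebraMap (Polynomial K) (RatFunc K) p}

/-- The carrier set of the tiled order `Λ ⊆ M_n(K(x))`:
matrices whose `(i,j)` entry lies in `x^{c_{ij}}·K[x]`. -/
def lambdaCarrier (K : Type*) [Field K] (n : ℕ) : Set (Matrix (Fin n) (Fin n) (RatFunc K)) :=
  {M | ∀ i j, M i j ∈ xPow K (cExp n i j)}

/-- Exponent pattern of the module `(i,j)` (1-based `i j`; `k : ℕ` is a 0-based coordinate,
so the 1-based coordinate is `k+1`): `0` for `k+1 ≤ i`, `1` for `i < k+1 ≤ j`, `2` otherwise. -/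
def dExp (i j k : ℕ) : ℤ := if k + 1 ≤ i then 0 else if k + 1 ≤ j then 1 else 2

/-- The carrier set of the `Λ`-module `(i,j)` inside the column space `K(x)^n`. -/
def ijSet (K : Type*) [Field K] (n : ℕ) (i j : ℕ) : Set (Fin n → RatFunc K) :=
  {v | ∀ k : Fin n, v k ∈ xPow K (dExp i j (k : ℕ))}

/-- Column vectors form a module over the matrix ring via `mulVec`. -/
instance matVecModule (K : Type*) [Field K] (n : ℕ) :
    Module (Matrix (Fin n) (Fin n) (RatFunc K)) (Fin n → RatFunc K) where
  smul M v := M.mulVec v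
  one_smul v := Matrix.one_mulVec v
  mul_smul M N v := (Matrix.mulVec_mulVec v M N).symm
  smul_zero M := Matrix.mulVec_zero M
  smul_add M u v := Matrix.mulVec_add M u v
  add_smul M N v := Matrix.add_mulVec M N v
  zero_smul v := Matrix.zero_mulVec v

universe u

/-!
Viewed inside its first row `V`, the rows of a Cohen–Macaulay `Λ`-module form a chain of lattices
`V = L 0 ⊇ L 1 ⊇ ⋯ ⊇ L n = x² V` with `x L k ⊆ L (k + 1)`, and this chain determines the module.
Looking at the first indices where the chain falls into `x V`, and then into `x² V` along some
vector, one splits off a line on which it has the exponents `0, …, 0, 1, …, 1, 2, …, 2` of a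
module `(i, j)`; hence an indecomposable module is one of these.

In an extension of `(s', t')` by `(s, t)`, the `k`-th row is given by its two exponents and a slope,
and the slope only matters modulo a power of `x`, its precision. Consecutive slopes on the cycle
`0, 1, …, n, 0` agree up to the lower one of the two precisions. If the pairs `(s, t)` and
`(s', t')` do not cross, all slopes can therefore be made equal, and the extension splits. If they
cross, there are at most two slopes, whose difference is a constant multiple of a critical power of
`x`. When the constant vanishes the extension splits, and otherwise the lines of the two slopes
exchange exponents, which gives the middle term.
-/

section Functionals

variable {R M : Type*} [CommRing R] [IsDomain R] [AddCommGroup M] [Module R M] {p : R}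

lemma pow_dvd_pow_mul_iff {a b : ℕ} {z : R} (hp : p ≠ 0) :
    p ^ a ∣ p ^ b * z ↔ p ^ (a - b) ∣ z := by
  rcases le_total a b with hab | hab
  · simp [Nat.sub_eq_zero_of_le hab, (pow_dvd_pow p hab).mul_right z]
  · rw [← Nat.add_sub_of_le hab, pow_add, mul_dvd_mul_iff_left (pow_ne_zero b hp),
      Nat.add_sub_cancel_left]

variable [IsPrincipalIdealRing R]

lemma exists_surjective_smul_eq {φ : M →ₗ[R] R} (hφ : φ ≠ 0) :
    ∃ (c : R) (ψ : M →ₗ[R] R), Function.Surjective ψ ∧ φ = c • ψ := by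
  obtain ⟨c, hc⟩ : ∃ c, LinearMap.range φ = Ideal.span {c} :=
    ⟨_, (Ideal.span_singleton_generator (LinearMap.range φ)).symm⟩
  have hc0 : c ≠ 0 := by
    rintro rfl
    rw [Ideal.span_singleton_eq_bot.2 rfl, LinearMap.range_eq_bot] at hc
    exact hφ hc
  have hdvd m : c ∣ φ m := Ideal.mem_span_singleton.1 (hc ▸ LinearMap.mem_range_self φ m)
  choose ψ hψ using hdvd
  refine ⟨c, { toFun := ψ, map_add' m m' := ?_, map_smul' r m := ?_ }, fun r => ?_, ?_⟩
  · apply mul_left_cancel₀ hc0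
    rw [mul_add, ← hψ, ← hψ, ← hψ, map_add]
  · apply mul_left_cancel₀ hc0
    rw [RingHom.id_apply, smul_eq_mul, mul_left_comm, ← hψ, ← hψ, map_smul, smul_eq_mul]
  · obtain ⟨m, hm⟩ : c ∈ LinearMap.range φ := hc ▸ Ideal.mem_span_singleton_self c
    refine ⟨r • m, ?_⟩
    have hm' : ψ m = 1 := mul_left_cancel₀ hc0 (by rw [← hψ, hm, mul_one])
    apply mul_left_cancel₀ hc0
    change c * ψ (r • m) = _
    rw [← hψ, map_smul, hψ, hm', smul_eq_mul, mul_one, mul_comm]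
  · exact LinearMap.ext hψ

lemma exists_forall_smul_ne [Module.Projective R M] [Nontrivial M] (hp : ¬ IsUnit p) :
    ∃ v : M, ∀ w, p • w ≠ v := by
  obtain ⟨x, hx⟩ := exists_ne (0 : M)
  obtain ⟨f, hf⟩ := Module.Projective.exists_dual_ne_zero R hx
  obtain ⟨-, ψ, hψ, -⟩ := exists_surjective_smul_eq (φ := f) (by rintro rfl; exact hf rfl)
  obtain ⟨v, hv⟩ := hψ 1
  refine ⟨v, fun w hw => hp (.of_mul_eq_one (ψ w) ?_)⟩
  rw [← smul_eq_mul, ← map_smul, hw, hv]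

/-- Modulo `p` this extends a functional on the line spanned by `v` in the vector space `M ⧸ P`. -/
lemma exists_surjective_functional [Module.Projective R M] (hp : Prime p) {P : Submodule R M}
    (hP : ∀ u, p • u ∈ P) {v : M} (hv : v ∉ P) :
    ∃ φ : M →ₗ[R] R, Function.Surjective φ ∧ (∀ u ∈ P, p ∣ φ u) ∧ ¬ p ∣ φ v := by
  let k := R ⧸ Ideal.span {p}
  have : (Ideal.span {p}).IsMaximal := PrincipalIdealRing.isMaximal_of_irreducible hp.irreducible
  let : Field k := Ideal.Quotient.field _
  have mkQ_eq_zero u : P.mkQ u = 0 ↔ u ∈ P := Submodule.Quotient.mk_eq_zero P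
  have torsion : Module.IsTorsionBySet R (M ⧸ P) (Ideal.span {p} : Ideal R) := by
    rw [Module.isTorsionBySet_span_singleton_iff]
    intro x
    obtain ⟨u, rfl⟩ := P.mkQ_surjective x
    rw [← map_smul]
    exact (mkQ_eq_zero _).2 (hP u)
  let : Module k (M ⧸ P) := torsion.module
  have : IsScalarTower R k (M ⧸ P) := torsion.isScalarTower
  obtain ⟨f, hf⟩ := Module.Projective.exists_dual_eq_one k
    (x := P.mkQ v) (mt (mkQ_eq_zero v).1 hv)
  obtain ⟨φ, hφ⟩ := Module.projective_lifting_property (Algebra.linearMap R k)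
    (f.restrictScalars R ∘ₗ P.mkQ) Ideal.Quotient.mk_surjective
  have dvd_iff m : p ∣ φ m ↔ f (P.mkQ m) = 0 := by
    rw [← Ideal.mem_span_singleton, ← Ideal.Quotient.eq_zero_iff_mem]
    exact Eq.congr_left (LinearMap.congr_fun hφ m)
  have hφv : ¬ p ∣ φ v := by rw [dvd_iff, hf]; exact one_ne_zero
  obtain ⟨c, ψ, hψ, rfl⟩ := exists_surjective_smul_eq (φ := φ) (by rintro rfl; simp at hφv)
  simp only [LinearMap.smul_apply, smul_eq_mul] at dvd_iff hφv
  have hc : ¬ p ∣ c := fun h => hφv (h.mul_right _)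
  refine ⟨ψ, hψ, fun u hu => ?_, fun h => hφv (h.mul_left _)⟩
  refine (hp.dvd_or_dvd ((dvd_iff u).2 ?_)).resolve_left hc
  rw [(mkQ_eq_zero u).2 hu, map_zero]

end Functionals

/-- The exponent pattern of the `Λ`-module `(i, j)`: it is `0` before `i`, `1` on `[i, j)` and `2`
from `j` on. Unlike `dExp`, it takes values in `ℕ`. -/
def stepExp (i j k : ℕ) : ℕ := if k < i then 0 else if k < j then 1 else 2

lemma stepExp_cases (i j k : ℕ) :
    k < i ∧ stepExp i j k = 0 ∨ i ≤ k ∧ k < j ∧ stepExp i j k = 1 ∨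
      i ≤ k ∧ j ≤ k ∧ stepExp i j k = 2 := by
  unfold stepExp
  split_ifs <;> omega

lemma dExp_eq_stepExp (i j k : ℕ) : dExp i j k = stepExp i j k := by
  simp only [dExp, stepExp, Nat.succ_le_iff]
  split_ifs <;> rfl

section LatticeChain

variable {R V : Type*} [CommRing R] [AddCommGroup V] [Module R V] {p : R} {n : ℕ}
  {L : ℕ → Submodule R V}

/-- A chain of lattices `V = L 0 ⊇ L 1 ⊇ ⋯ ⊇ L n = p² V` with `p L k ⊆ L (k + 1)`: the shape of the
rows of a Cohen–Macaulay `Λ`-module, all of them viewed inside the first row. -/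
structure IsLatticeChain (p : R) (n : ℕ) (L : ℕ → Submodule R V) : Prop where
  zero : L 0 = ⊤
  succ_le : ∀ k < n, L (k + 1) ≤ L k
  smul_mem : ∀ k < n, ∀ u ∈ L k, p • u ∈ L (k + 1)
  mem_last : ∀ u, u ∈ L n ↔ ∃ v, p ^ 2 • v = u

namespace IsLatticeChain

lemma le_of_le (hL : IsLatticeChain p n L) {k l : ℕ} (hkl : k ≤ l) (hl : l ≤ n) : L l ≤ L k := by
  induction l, hkl using Nat.le_induction with
  | base => exact le_rfl
  | succ l _ ih => exact (hL.succ_le l (by omega)).trans (ih (by omega))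

lemma sq_smul_mem (hL : IsLatticeChain p n L) {k : ℕ} (hk : k ≤ n) (v : V) : p ^ 2 • v ∈ L k :=
  hL.le_of_le hk le_rfl ((hL.mem_last _).2 ⟨v, rfl⟩)

/-- `a` is the first index with `L a ⊆ p V`, and `b` the first one for which no element of
`L (a - 1)` outside `p V` is mapped into `L b` by `p`. -/
lemma exists_jumps [IsDomain R] [Module.IsTorsionFree R V] (hL : IsLatticeChain p n L)
    (hp : p ≠ 0) {v₀ : V} (hv₀ : ∀ v, p • v ≠ v₀) :
    ∃ a b v, 1 ≤ a ∧ a < b ∧ b ≤ n ∧ (∀ u ∈ L a, ∃ u', p • u' = u) ∧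
      v ∈ L (a - 1) ∧ p • v ∈ L (b - 1) ∧ p • v ∉ L b := by
  have last_divisible : ∀ u ∈ L n, ∃ u', p • u' = u := fun u hu => by
    obtain ⟨v, rfl⟩ := (hL.mem_last u).1 hu
    exact ⟨p • v, by rw [smul_smul, sq]⟩
  obtain ⟨a, ha_le, ha⟩ := exists_minimal_le_of_wellFoundedLT
    (fun a => ∀ u ∈ L a, ∃ u', p • u' = u) n last_divisible
  have last_notMem : ∀ v ∈ L (a - 1), (∀ u, p • u ≠ v) → p • v ∉ L n := by
    intro v _ hv hmem
    obtain ⟨w, hw⟩ := (hL.mem_last _).1 hmem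
    exact hv w (smul_right_injective V hp (by simpa only [sq, mul_smul] using hw))
  obtain ⟨b, hb_le, hb⟩ := exists_minimal_le_of_wellFoundedLT
    (fun b => ∀ v ∈ L (a - 1), (∀ u, p • u ≠ v) → p • v ∉ L b) n last_notMem
  have one_le : 1 ≤ a := by
    refine Nat.one_le_iff_ne_zero.2 fun ha0 => ?_
    obtain ⟨v, hv⟩ := ha.prop v₀ (by rw [ha0, hL.zero]; exact Submodule.mem_top)
    exact hv₀ v hv
  have a_lt_b : a < b := by
    obtain ⟨v, hv, hv'⟩ : ∃ v ∈ L (a - 1), ∀ u, p • u ≠ v := by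
      simpa only [not_forall, not_exists, exists_prop] using
        ha.not_prop_of_lt (Nat.sub_one_lt_of_lt one_le)
    by_contra! hba
    have hpv : p • v ∈ L a := by
      simpa only [Nat.sub_add_cancel one_le] using
        hL.smul_mem (a - 1) (by omega) v hv
    exact hb.prop v hv hv' (hL.le_of_le hba ha_le hpv)
  obtain ⟨v, hv, hv', hpv⟩ : ∃ v ∈ L (a - 1), (∀ u, p • u ≠ v) ∧ p • v ∈ L (b - 1) := by
    simpa only [not_forall, not_not, exists_prop] using
      hb.not_prop_of_lt (Nat.sub_one_lt_of_lt a_lt_b)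
  exact ⟨a, b, v, one_le, a_lt_b, hb_le, ha.prop, hv, hpv, hb.prop v hv hv'⟩

lemma exists_summand [IsDomain R] [IsPrincipalIdealRing R] [Module.Projective R V] [Nontrivial V]
    (hL : IsLatticeChain p n L) (hp : Prime p) :
    ∃ (a b : ℕ) (φ : V →ₗ[R] R) (v : V), 1 ≤ a ∧ a < b ∧ b ≤ n ∧ φ v = 1 ∧
      (∀ k ≤ n, p ^ stepExp a b k • v ∈ L k) ∧
      ∀ k ≤ n, ∀ u ∈ L k, p ^ stepExp a b k ∣ φ u := by
  obtain ⟨v₀, hv₀⟩ := exists_forall_smul_ne (M := V) hp.not_isUnit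
  obtain ⟨a, b, v, ha, hab, hb, hdiv, hv, hpv, hpv'⟩ := hL.exists_jumps hp.ne_zero hv₀
  obtain ⟨φ, hφ, hφb, hφv⟩ := exists_surjective_functional hp (P := (L b).comap (p • .id)) (v := v)
    (fun u => by simpa [smul_smul, ← sq] using hL.sq_smul_mem hb u) (by simpa using hpv')
  obtain ⟨w, hw⟩ := hφ 1
  obtain ⟨x, y, hxy⟩ := ((hp.irreducible.coprime_iff_not_dvd.2 hφv).symm.pow_right (n := 2))
  refine ⟨a, b, φ, x • v + y • p ^ 2 • w, ha, hab, hb, ?_, fun k hk => ?_, fun k hk u hu => ?_⟩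
  · simpa [hw] using hxy
  · have hw : p ^ stepExp a b k • y • p ^ 2 • w ∈ L k :=
      Submodule.smul_mem _ _ (Submodule.smul_mem _ _ (hL.sq_smul_mem hk w))
    rw [smul_add, smul_comm _ x]
    refine add_mem (Submodule.smul_mem _ _ ?_) hw
    obtain ⟨hka, h⟩ | ⟨-, hkb, h⟩ | ⟨-, -, h⟩ := stepExp_cases a b k <;> rw [h]
    · exact hL.le_of_le (l := a - 1) (by omega) (by omega) (by simpa using hv)
    · exact hL.le_of_le (l := b - 1) (by omega) (by omega) (by simpa using hpv)
    · exact hL.sq_smul_mem hk v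
  · obtain ⟨-, h⟩ | ⟨hak, -, h⟩ | ⟨-, hbk, h⟩ := stepExp_cases a b k <;> rw [h]
    · simp
    · obtain ⟨u', rfl⟩ := hdiv u (hL.le_of_le hak hk hu)
      simp
    · obtain ⟨u', rfl⟩ := hdiv u (hL.le_of_le (hab.le.trans hbk) hk hu)
      have : p ∣ φ u' := hφb u' (by simpa using hL.le_of_le hbk hk hu)
      rw [map_smul, smul_eq_mul, sq]
      exact mul_dvd_mul_left p this

end IsLatticeChain
end LatticeChain

section SlopeLattice

variable {R : Type*} [CommRing R] {p : R} {d d' c : ℕ} {g g' h : R}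

/-- The lattice with kernel exponent `d` and quotient exponent `d'` in the extension `R × R` of the
second factor by the first one, generated over `p ^ d R × 0` by the element with second coordinate
`p ^ d'` on the line of slope `g / p ^ 2`. The denominator `p ^ 2` is cleared, so that `g` ranges
over `R`. -/
def slopeLattice (p : R) (d d' : ℕ) (g : R) : Submodule R (R × R) :=
  Submodule.comap (.snd R R R) (Ideal.span {p ^ d'}) ⊓
    Submodule.comap (p ^ 2 • .fst R R R - g • .snd R R R) (Ideal.span {p ^ (d + 2)})

lemma mem_slopeLattice {x : R × R} :
    x ∈ slopeLattice p d d' g ↔ p ^ d' ∣ x.2 ∧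
      p ^ (d + 2) ∣ p ^ 2 * x.1 - g * x.2 := by
  simp [slopeLattice, Ideal.mem_span_singleton]

lemma slopeLattice_congr (hg : p ^ (d + 2 - d') ∣ g - g') :
    slopeLattice p d d' g = slopeLattice p d d' g' := by
  ext x
  simp only [mem_slopeLattice]
  refine and_congr_right fun hx => ?_
  have : p ^ (d + 2) ∣ (g - g') * x.2 :=
    (pow_dvd_pow p (by omega)).trans (pow_add p (d + 2 - d') d' ▸ mul_dvd_mul hg hx)
  rw [← dvd_add_left this]
  ring_nf

variable [IsDomain R]

lemma dvd_sub_of_mem_slopeLattice (hp : p ≠ 0) (hh : (h, p ^ c) ∈ slopeLattice p d d' g)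
    (hg' : p ^ 2 * h = g' * p ^ c) : p ^ (d + 2 - c) ∣ g' - g := by
  have := (mem_slopeLattice.1 hh).2
  rwa [hg', ← sub_mul, mul_comm, pow_dvd_pow_mul_iff hp] at this

lemma eq_slopeLattice (hp : p ≠ 0) {L : Submodule R (R × R)}
    (mem_iff : ∀ β, (β, 0) ∈ L ↔ p ^ d ∣ β) (dvd_of_mem : ∀ x ∈ L, p ^ d' ∣ x.2)
    (hh : (h, p ^ d') ∈ L) (hg : p ^ 2 * h = g * p ^ d') : L = slopeLattice p d d' g := by
  ext ⟨x, z⟩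
  rw [mem_slopeLattice, ← and_iff_right_of_imp (dvd_of_mem (x, z))]
  refine and_congr_right fun hz => ?_
  obtain ⟨y, rfl : z = p ^ d' * y⟩ := hz
  have reduce : (x, p ^ d' * y) = (x - y * h, 0) + y • (h, p ^ d') := by
    ext <;> simp [mul_comm]
  rw [reduce, L.add_mem_iff_left (L.smul_mem y hh), mem_iff,
    ← mul_dvd_mul_iff_left (pow_ne_zero 2 hp), ← pow_add, add_comm 2 d]
  exact iff_of_eq (congrArg _ (by simp; linear_combination (-y) * hg))

end SlopeLattice

section RankTwoExtension

variable {R V W : Type*} [CommRing R] [AddCommGroup V] [Module R V] [AddCommGroup W] [Module R W]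
  {p : R} {n : ℕ} {d d' : ℕ → ℕ} {L : ℕ → Submodule R V} {i : R →ₗ[R] V} {π : V →ₗ[R] R}

/-- A lattice chain in the middle of a short exact sequence `0 → R → V → R → 0` inducing the chain
`p ^ d k R` on the kernel and the chain `p ^ d' k R` on the quotient. -/
structure IsRankTwoExtension (p : R) (n : ℕ) (d d' : ℕ → ℕ) (L : ℕ → Submodule R V)
    (i : R →ₗ[R] V) (π : V →ₗ[R] R) : Prop extends IsLatticeChain p n L where
  injective : Function.Injective i
  exact : Function.Exact i π
  surjective : Function.Surjective π
  mem_iff : ∀ k ≤ n, ∀ β, i β ∈ L k ↔ p ^ d k ∣ β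
  exists_mem_iff : ∀ k ≤ n, ∀ c, (∃ u ∈ L k, π u = c) ↔ p ^ d' k ∣ c

/-- The power of `p` modulo which the lattice with exponents `d k` and `d' k` determines the
numerator of its slope. -/
def slopePrecision (d d' : ℕ → ℕ) (k : ℕ) : ℕ := d k + 2 - d' k

/-- The elements `G k / p ^ 2` are slopes of the chain `L`. Passing from `k` to `k + 1` changes `G`
only modulo the smaller of the two powers of `p` by which it is determined, and the two ends of the
chain can both be given the slope `0`. -/
structure HasSlopes (p : R) (n : ℕ) (d d' : ℕ → ℕ) (L : ℕ → Submodule R (R × R)) (G : ℕ → R) :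
    Prop where
  eq_slopeLattice : ∀ k ≤ n, L k = slopeLattice p (d k) (d' k) (G k)
  dvd_sub_succ : ∀ k < n,
    p ^ min (slopePrecision d d' k) (slopePrecision d d' (k + 1)) ∣ G k - G (k + 1)
  sq_dvd_zero : p ^ 2 ∣ G 0
  sq_dvd_last : p ^ 2 ∣ G n

lemma IsLatticeChain.comap (hL : IsLatticeChain p n L) (e : W ≃ₗ[R] V) :
    IsLatticeChain p n fun k => (L k).comap e.toLinearMap where
  zero := by simp [hL.zero]
  succ_le k hk := Submodule.comap_mono (hL.succ_le k hk)
  smul_mem k hk u hu := by simpa using hL.smul_mem k hk _ hu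
  mem_last u := by
    rw [Submodule.mem_comap, hL.mem_last]
    refine e.surjective.exists.trans (exists_congr fun v => ?_)
    simp [← map_smul]

namespace IsRankTwoExtension

lemma exists_equiv (hL : IsRankTwoExtension p n d d' L i π) :
    ∃ e : (R × R) ≃ₗ[R] V, (∀ x, π (e x) = x.2) ∧
      IsRankTwoExtension p n d d' (fun k => (L k).comap e.toLinearMap) (.inl R R R)
        (.snd R R R) := by
  obtain ⟨s, hs⟩ := Module.projective_lifting_property π .id hL.surjective
  obtain ⟨e, hi, hπ⟩ := hL.exact.splitSurjectiveEquiv hL.injective ⟨s, hs⟩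
  have hi' β : e.symm (β, 0) = i β := by rw [hi]; rfl
  have hπ' x : π (e.symm x) = x.2 := by rw [hπ]; simp
  exact ⟨e.symm, hπ',
    { toIsLatticeChain := hL.comap e.symm
      injective := LinearMap.inl_injective
      exact := .inl_snd
      surjective := Prod.snd_surjective
      mem_iff := fun k hk β => by simpa [hi'] using hL.mem_iff k hk β
      exists_mem_iff := fun k hk c => by
        rw [← hL.exists_mem_iff k hk c, e.symm.surjective.exists]
        simp [hπ'] }⟩

lemma exists_map_eq_pow (hL : IsRankTwoExtension p n d d' L i π) {k : ℕ} (hk : k ≤ n) :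
    ∃ u ∈ L k, π u = p ^ d' k :=
  (hL.exists_mem_iff k hk _).2 dvd_rfl

variable [IsDomain R]

lemma quot_exp_le_iff (hL : IsRankTwoExtension p n d d' L i π) (hp : Prime p) {k m : ℕ}
    (hk : k ≤ n) : d' k ≤ m ↔ ∃ u ∈ L k, π u = p ^ m := by
  rw [hL.exists_mem_iff k hk, pow_dvd_pow_iff hp.ne_zero hp.not_isUnit]

lemma quot_exp_le_two (hL : IsRankTwoExtension p n d d' L i π) (hp : Prime p) {k : ℕ}
    (hk : k ≤ n) : d' k ≤ 2 := by
  obtain ⟨v, hv⟩ := hL.surjective 1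
  exact (hL.quot_exp_le_iff hp hk).2 ⟨p ^ 2 • v, hL.sq_smul_mem hk v, by simp [hv]⟩

lemma quot_exp_le_succ (hL : IsRankTwoExtension p n d d' L i π) (hp : Prime p) {k : ℕ}
    (hk : k < n) : d' k ≤ d' (k + 1) := by
  obtain ⟨u, hu, hπu⟩ := hL.exists_map_eq_pow (k := k + 1) hk
  exact (hL.quot_exp_le_iff hp hk.le).2 ⟨u, hL.succ_le k hk hu, hπu⟩

lemma quot_exp_succ_le (hL : IsRankTwoExtension p n d d' L i π) (hp : Prime p) {k : ℕ}
    (hk : k < n) : d' (k + 1) ≤ d' k + 1 := by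
  obtain ⟨u, hu, hπu⟩ := hL.exists_map_eq_pow hk.le
  exact (hL.quot_exp_le_iff hp hk).2
    ⟨p • u, hL.smul_mem k hk u hu, by rw [map_smul, hπu, smul_eq_mul, pow_succ']⟩

section Slopes

variable {L : ℕ → Submodule R (R × R)} {k : ℕ} {h h' g g' : R}

lemma eq_slopeLattice_of_mem
    (hL : IsRankTwoExtension p n d d' L (.inl R R R) (.snd R R R)) (hp : Prime p) (hk : k ≤ n)
    (hh : (h, p ^ d' k) ∈ L k) (hg : p ^ 2 * h = g * p ^ d' k) :
    L k = slopeLattice p (d k) (d' k) g :=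
  eq_slopeLattice hp.ne_zero (hL.mem_iff k hk)
    (fun x hx => (hL.exists_mem_iff k hk _).1 ⟨x, hx, rfl⟩) hh hg

lemma pow_min_dvd_slope_sub_slope_succ
    (hL : IsRankTwoExtension p n d d' L (.inl R R R) (.snd R R R)) (hp : Prime p) (hk : k < n)
    (hh : (h, p ^ d' k) ∈ L k) (hg : p ^ 2 * h = g * p ^ d' k)
    (hh' : (h', p ^ d' (k + 1)) ∈ L (k + 1)) (hg' : p ^ 2 * h' = g' * p ^ d' (k + 1)) :
    p ^ min (slopePrecision d d' k) (slopePrecision d d' (k + 1)) ∣ g - g' := by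
  have le_succ := hL.quot_exp_le_succ hp hk
  obtain heq | heq : d' (k + 1) = d' k ∨ d' (k + 1) = d' k + 1 := by
    have := hL.quot_exp_succ_le hp hk
    omega
  · have hmem := hL.succ_le k hk hh'
    rw [hL.eq_slopeLattice_of_mem hp hk.le hh hg] at hmem
    rw [dvd_sub_comm]
    refine (pow_dvd_pow p ?_).trans (dvd_sub_of_mem_slopeLattice hp.ne_zero hmem hg')
    simp only [slopePrecision]
    omega
  · have hmem := hL.smul_mem k hk _ hh
    rw [hL.eq_slopeLattice_of_mem (k := k + 1) hp hk hh' hg', Prod.smul_mk, smul_eq_mul,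
      smul_eq_mul, ← pow_succ'] at hmem
    refine (pow_dvd_pow p ?_).trans (dvd_sub_of_mem_slopeLattice hp.ne_zero hmem ?_)
    · simp only [slopePrecision]
      omega
    · rw [mul_left_comm, hg]
      ring

lemma exists_hasSlopes (hL : IsRankTwoExtension p n d d' L (.inl R R R) (.snd R R R))
    (hp : Prime p) : ∃ G, HasSlopes p n d d' L G := by
  have exists_mem : ∀ k ≤ n, ∃ h, (h, p ^ d' k) ∈ L k := fun k hk => by
    obtain ⟨⟨h, -⟩, hh, rfl⟩ := hL.exists_map_eq_pow hk
    exact ⟨h, hh⟩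
  choose! h hh using exists_mem
  let G k := p ^ (2 - d' k) * h k
  have hG k (hk : k ≤ n) : p ^ 2 * h k = G k * p ^ d' k := by
    rw [← pow_sub_mul_pow p (hL.quot_exp_le_two hp hk)]
    ring
  refine ⟨G, fun k hk => hL.eq_slopeLattice_of_mem hp hk (hh k hk) (hG k hk), fun k hk => ?_,
    ?_, ?_⟩
  · exact hL.pow_min_dvd_slope_sub_slope_succ hp hk (hh k hk.le) (hG k hk.le) (hh _ hk) (hG _ hk)
  · have : d' 0 = 0 := by
      refine Nat.le_zero.1 ((hL.quot_exp_le_iff hp n.zero_le).2 ⟨(0, 1), ?_, by simp⟩)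
      rw [hL.zero]
      exact Submodule.mem_top
    simp [G, this]
  · obtain ⟨v, hv⟩ := (hL.mem_last _).1 (hh n le_rfl)
    exact (Dvd.intro _ (congrArg Prod.fst hv)).mul_left _

end Slopes

end IsRankTwoExtension
end RankTwoExtension

section JoinedAbove

/-- One of the two arcs between `k` and `l` on the cycle `0, 1, …, n, 0` only meets indices at which
`e` is at least `m`. -/
def JoinedAbove (n : ℕ) (e : ℕ → ℕ) (m k l : ℕ) : Prop :=
  (∀ j, min k l ≤ j → j ≤ max k l → m ≤ e j) ∨ ∀ j ≤ n, j ≤ min k l ∨ max k l ≤ j → m ≤ e j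

variable {R : Type*} [CommRing R] {p : R} {n m k l : ℕ} {e : ℕ → ℕ} {G : ℕ → R}

lemma JoinedAbove.symm (h : JoinedAbove n e m k l) : JoinedAbove n e m l k := by
  rwa [JoinedAbove, min_comm, max_comm]

lemma dvd_sub_of_forall_le (hG : ∀ j < n, p ^ min (e j) (e (j + 1)) ∣ G j - G (j + 1))
    (hkl : k ≤ l) (hl : l ≤ n) (hm : ∀ j, k ≤ j → j ≤ l → m ≤ e j) : p ^ m ∣ G k - G l := by
  induction l, hkl using Nat.le_induction with
  | base => simp
  | succ l hkl ih =>
    have hk : p ^ m ∣ G k - G l := ih (by omega) fun j hj hj' => hm j hj (by omega)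
    have hl : p ^ m ∣ G l - G (l + 1) :=
      (pow_dvd_pow p (le_min (hm l hkl (by omega)) (hm (l + 1) (by omega) le_rfl))).trans
        (hG l (by omega))
    simpa using dvd_add hk hl

lemma JoinedAbove.dvd_sub (h : JoinedAbove n e m k l)
    (hG : ∀ j < n, p ^ min (e j) (e (j + 1)) ∣ G j - G (j + 1))
    (hwrap : p ^ min (e 0) (e n) ∣ G 0 - G n) (hk : k ≤ n) (hl : l ≤ n) : p ^ m ∣ G k - G l := by
  wlog hkl : k ≤ l generalizing k l
  · rw [dvd_sub_comm]
    exact this h.symm hl hk (by omega)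
  rw [JoinedAbove, min_eq_left hkl, max_eq_right hkl] at h
  obtain h | h := h
  · exact dvd_sub_of_forall_le hG hkl hl h
  · have h0 : p ^ m ∣ G 0 - G k :=
      dvd_sub_of_forall_le hG k.zero_le hk fun j _ hj => h j (by omega) (.inl hj)
    have hn : p ^ m ∣ G l - G n :=
      dvd_sub_of_forall_le hG hl le_rfl fun j hj hj' => h j hj' (.inr hj)
    have h0n : p ^ m ∣ G 0 - G n := (pow_dvd_pow p (le_min
      (h 0 n.zero_le (.inl k.zero_le)) (h n le_rfl (.inr hl)))).trans hwrap
    convert (h0n.sub h0).sub hn using 1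
    ring

end JoinedAbove

section Crossing

variable {R : Type*} [CommRing R] {p : R} {n ε : ℕ} {d d' : ℕ → ℕ}
  {L : ℕ → Submodule R (R × R)} {G : ℕ → R}

lemma HasSlopes.dvd_sub_of_joinedAbove (hG : HasSlopes p n d d' L G) (h0 : d 0 = d' 0) {m k l : ℕ}
    (h : JoinedAbove n (slopePrecision d d') m k l) (hk : k ≤ n) (hl : l ≤ n) :
    p ^ m ∣ G k - G l := by
  refine h.dvd_sub hG.dvd_sub_succ ((pow_dvd_pow p (min_le_left _ _)).trans ?_) hk hl
  simpa [slopePrecision, h0] using hG.sq_dvd_zero.sub hG.sq_dvd_last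

lemma HasSlopes.exists_common_slope (hG : HasSlopes p n d d' L G) (h0 : d 0 = d' 0) {I : Set ℕ}
    (hI : 0 ∉ I) {k₀ : ℕ} (hk₀ : k₀ ≤ n) (joined : ∀ k ≤ n, k ∉ I →
      JoinedAbove n (slopePrecision d d') (slopePrecision d d' k) k k₀) :
    ∃ c, G k₀ = p ^ 2 * c ∧ ∀ k ≤ n, k ∉ I → L k = slopeLattice p (d k) (d' k) (p ^ 2 * c) := by
  have dvd k (hk : k ≤ n) (hkI : k ∉ I) : p ^ slopePrecision d d' k ∣ G k - G k₀ :=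
    hG.dvd_sub_of_joinedAbove h0 (joined k hk hkI) hk hk₀
  have : p ^ 2 ∣ G 0 - G k₀ := by simpa [slopePrecision, h0] using dvd 0 n.zero_le hI
  obtain ⟨c, hc⟩ : p ^ 2 ∣ G k₀ := (dvd_sub_right hG.sq_dvd_zero).1 this
  exact ⟨c, hc, fun k hk hkI => by
    rw [hG.eq_slopeLattice k hk, ← hc, slopeLattice_congr (dvd k hk hkI)]⟩

/-- The change of basis of `R × R` with first basis vector `(c, 1)` on the line of slope `c`, and
second one `r • (c, 1) + u • (1, 0)`. -/
def slopeEquiv (c r : R) (u : Rˣ) : (R × R) ≃ₗ[R] (R × R) where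
  toFun x := (c * (x.1 + r * x.2) + u * x.2, x.1 + r * x.2)
  invFun y := (y.2 - r * (↑u⁻¹ * (y.1 - c * y.2)), ↑u⁻¹ * (y.1 - c * y.2))
  map_add' x y := by ext1 <;> simp <;> ring
  map_smul' a x := by ext1 <;> simp <;> ring
  left_inv x := by simp
  right_inv y := by simp

variable [IsDomain R]

lemma slopeEquiv_mem_slopeLattice_outer (hp : p ≠ 0) {c : R} {u : Rˣ} {d d' : ℕ} (hd : d' ≤ d + ε)
    (x y : R) : slopeEquiv c (p ^ ε) u (x, y) ∈ slopeLattice p d d' (p ^ 2 * c) ↔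
      p ^ d' ∣ x ∧ p ^ d ∣ y := by
  have line : p ^ (d + 2) ∣ p ^ 2 * (c * (x + p ^ ε * y) + u * y) - p ^ 2 * c * (x + p ^ ε * y) ↔
      p ^ d ∣ y := by
    rw [show _ - _ = p ^ 2 * (u * y) by ring, pow_dvd_pow_mul_iff hp, Nat.add_sub_cancel,
      Units.dvd_mul_left]
  rw [mem_slopeLattice]
  refine (and_congr_right' line).trans (and_congr_left fun hy => dvd_add_left ?_)
  exact (pow_dvd_pow p hd).trans (by rw [add_comm, pow_add]; exact mul_dvd_mul_left _ hy)

lemma slopeEquiv_mem_slopeLattice_inner (hp : p ≠ 0) {c : R} {u : Rˣ} {d d' : ℕ} (hε : ε ≤ 2)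
    (hd : d' + 1 = d + ε) (x y : R) :
    slopeEquiv c (p ^ ε) u (x, y) ∈ slopeLattice p d d' (p ^ 2 * c + p ^ (2 - ε) * u) ↔
      p ^ (d' + 1) ∣ x ∧ p ^ (d - 1) ∣ y := by
  have line : p ^ (d + 2) ∣ p ^ 2 * (c * (x + p ^ ε * y) + u * y) -
      (p ^ 2 * c + p ^ (2 - ε) * u) * (x + p ^ ε * y) ↔ p ^ (d' + 1) ∣ x := by
    have : p ^ 2 * (c * (x + p ^ ε * y) + u * y) -
        (p ^ 2 * c + p ^ (2 - ε) * u) * (x + p ^ ε * y) = p ^ (2 - ε) * (↑(-u) * x) := by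
      rw [← pow_sub_mul_pow p hε, Units.val_neg]
      ring
    rw [this, pow_dvd_pow_mul_iff hp, Units.dvd_mul_left, show d + 2 - (2 - ε) = d' + 1 by omega]
  rw [mem_slopeLattice, and_comm]
  refine (and_congr_left' line).trans (and_congr_right fun hx => ?_)
  change p ^ d' ∣ x + p ^ ε * y ↔ _
  rw [dvd_add_right ((pow_dvd_pow p d'.le_succ).trans hx), pow_dvd_pow_mul_iff hp,
    show d' - ε = d - 1 by omega]

/-- If the slopes outside `I` agree and the slopes inside `I` agree, then either all slopes agree,
or the two slopes differ by `p ^ (2 - ε)` times a unit and the two lines spanned by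
`slopeEquiv` exchange one power of `p` on `I`. -/
lemma HasSlopes.common_slope_or_exchange (hG : HasSlopes p n d d' L G) (hp : p ≠ 0)
    (hunit : ∀ a, p ∣ a ∨ ∃ u : Rˣ, p ∣ a - u) (h0 : d 0 = d' 0) (hε : ε ≤ 2) {I : Set ℕ}
    (hI : 0 ∉ I) {k₀ k₁ : ℕ} (hk₀ : k₀ ≤ n) (hk₁ : k₁ ≤ n)
    (outer : ∀ k ≤ n, k ∉ I → d' k ≤ d k + ε ∧
      JoinedAbove n (slopePrecision d d') (slopePrecision d d' k) k k₀)
    (inner : ∀ k ∈ I, k ≤ n → d' k + 1 = d k + ε ∧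
      JoinedAbove n (slopePrecision d d') (slopePrecision d d' k) k k₁)
    (link : JoinedAbove n (slopePrecision d d') (2 - ε) k₁ k₀) :
    (∃ c, ∀ k ≤ n, L k = slopeLattice p (d k) (d' k) (p ^ 2 * c)) ∨
      ∃ σ : (R × R) ≃ₗ[R] (R × R), ∀ k ≤ n, ∀ x y,
        (k ∉ I → (σ (x, y) ∈ L k ↔ p ^ d' k ∣ x ∧ p ^ d k ∣ y)) ∧
        (k ∈ I → (σ (x, y) ∈ L k ↔ p ^ (d' k + 1) ∣ x ∧ p ^ (d k - 1) ∣ y)) := by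
  obtain ⟨c, hc, eq_outer⟩ :=
    hG.exists_common_slope h0 hI hk₀ fun k hk hkI => (outer k hk hkI).2
  obtain ⟨a, ha⟩ : p ^ (2 - ε) ∣ G k₁ - p ^ 2 * c :=
    hc ▸ hG.dvd_sub_of_joinedAbove h0 link hk₁ hk₀
  have eq_inner (b) (hb : p ∣ a - b) (k) (hkI : k ∈ I) (hk : k ≤ n) :
      L k = slopeLattice p (d k) (d' k) (p ^ 2 * c + p ^ (2 - ε) * b) := by
    obtain ⟨hd, joined⟩ := inner k hkI hk
    have hk₁' := hG.dvd_sub_of_joinedAbove h0 joined hk hk₁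
    have hb' : p ^ slopePrecision d d' k ∣ p ^ (2 - ε) * (a - b) := by
      rw [slopePrecision, show d k + 2 - d' k = 2 - ε + 1 by omega, pow_succ]
      exact mul_dvd_mul_left _ hb
    rw [hG.eq_slopeLattice k hk]
    refine slopeLattice_congr ?_
    rw [show G k - (p ^ 2 * c + p ^ (2 - ε) * b) = G k - G k₁ + p ^ (2 - ε) * (a - b) by
      linear_combination ha]
    exact dvd_add hk₁' hb'
  obtain h | ⟨u, hu⟩ := hunit a
  · refine .inl ⟨c, fun k hk => ?_⟩
    by_cases hkI : k ∈ I
    · simpa using eq_inner 0 (by simpa using h) k hkI hk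
    · exact eq_outer k hk hkI
  · refine .inr ⟨slopeEquiv c (p ^ ε) u, fun k hk x y => ⟨fun hkI => ?_, fun hkI => ?_⟩⟩
    · rw [eq_outer k hk hkI, slopeEquiv_mem_slopeLattice_outer hp (outer k hk hkI).1]
    · rw [eq_inner u hu k hkI hk, slopeEquiv_mem_slopeLattice_inner hp hε (inner k hkI hk).1]

end Crossing

section Split

lemma exists_joinedAbove {n s t s' t' : ℕ} (hs : 1 ≤ s) (hst : s < t) (ht : t ≤ n) (hs' : 1 ≤ s')
    (hst' : s' < t') (h : t ≤ s' ∨ t' ≤ s ∨ s ≤ s' ∧ t' ≤ t ∨ s' ≤ s ∧ t ≤ t') :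
    ∃ k₀ ≤ n, ∀ k ≤ n, JoinedAbove n (slopePrecision (stepExp s t) (stepExp s' t'))
      (slopePrecision (stepExp s t) (stepExp s' t') k) k k₀ := by
  unfold JoinedAbove slopePrecision
  rcases h with h | h | h | h
  · exact ⟨t, ht, fun k _ => .inl fun _ _ _ => by grind [stepExp]⟩
  · refine ⟨0, n.zero_le, fun k _ => ?_⟩
    by_cases hk' : s ≤ k
    · exact .inr fun _ _ _ => by grind [stepExp]
    · exact .inl fun _ _ _ => by grind [stepExp]
  · refine ⟨s, by omega, fun k _ => ?_⟩
    by_cases hk' : t ≤ k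
    · exact .inr fun _ _ _ => by grind [stepExp]
    · exact .inl fun _ _ _ => by grind [stepExp]
  · refine ⟨t, ht, fun k _ => ?_⟩
    by_cases hk' : k < s'
    · exact .inr fun _ _ _ => by grind [stepExp]
    · exact .inl fun _ _ _ => by grind [stepExp]

namespace HasSlopes

variable {R : Type*} [CommRing R] {p : R} {n s t s' t' : ℕ}
  {L : ℕ → Submodule R (R × R)} {G : ℕ → R}

lemma exists_common_slope_of_noncrossing
    (hG : HasSlopes p n (stepExp s t) (stepExp s' t') L G) (hs : 1 ≤ s) (hst : s < t) (ht : t ≤ n)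
    (hs' : 1 ≤ s') (hst' : s' < t')
    (h : t ≤ s' ∨ t' ≤ s ∨ s ≤ s' ∧ t' ≤ t ∨ s' ≤ s ∧ t ≤ t') :
    ∃ c, ∀ k ≤ n, L k = slopeLattice p (stepExp s t k) (stepExp s' t' k) (p ^ 2 * c) := by
  obtain ⟨k₀, hk₀, joined⟩ := exists_joinedAbove hs hst ht hs' hst' h
  obtain ⟨c, -, hc⟩ := hG.exists_common_slope (by grind [stepExp]) (Set.notMem_empty 0) hk₀
    fun k hk _ => joined k hk
  exact ⟨c, fun k hk => hc k hk (Set.notMem_empty k)⟩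

variable [IsDomain R]

lemma common_slope_or_crossing_right (hG : HasSlopes p n (stepExp s t) (stepExp s' t') L G)
    (hp : p ≠ 0) (hunit : ∀ a, p ∣ a ∨ ∃ u : Rˣ, p ∣ a - u) (hs : 1 ≤ s) (hss' : s < s')
    (hs't : s' < t) (htt' : t < t') (ht' : t' ≤ n) :
    (∃ c, ∀ k ≤ n, L k = slopeLattice p (stepExp s t k) (stepExp s' t' k) (p ^ 2 * c)) ∨
      ∃ σ : (R × R) ≃ₗ[R] (R × R), ∀ k ≤ n, ∀ x y,
        σ (x, y) ∈ L k ↔ p ^ stepExp s t' k ∣ x ∧ p ^ stepExp s' t k ∣ y := by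
  refine (hG.common_slope_or_exchange hp hunit (ε := 0) (I := Set.Ico t t') (k₀ := s) (k₁ := t)
    (by grind [stepExp]) (by omega) (by grind) (by omega) (by omega) (fun k _ hkI => ⟨?_, ?_⟩)
    (fun k hkI _ => ⟨?_, ?_⟩) ?_).imp_right ?_
  · grind [stepExp]
  · unfold JoinedAbove slopePrecision
    by_cases hk' : t' ≤ k
    · exact .inr fun _ _ _ => by grind [stepExp]
    · exact .inl fun _ _ _ => by grind [stepExp]
  · grind [stepExp]
  · exact .inl fun _ _ _ => by grind [stepExp, slopePrecision]
  · exact .inl fun _ _ _ => by grind [stepExp, slopePrecision]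
  · rintro ⟨σ, hσ⟩
    refine ⟨(LinearEquiv.prodComm R R R).trans σ, fun k hk x y => ?_⟩
    rw [LinearEquiv.trans_apply, LinearEquiv.prodComm_apply, Prod.swap_prod_mk, and_comm]
    by_cases hkI : k ∈ Set.Ico t t'
    · have hd : stepExp s t k - 1 = stepExp s t' k := by grind [stepExp]
      have hd' : stepExp s' t' k + 1 = stepExp s' t k := by grind [stepExp]
      rw [← hd, ← hd']
      exact (hσ k hk y x).2 hkI
    · have hd : stepExp s t k = stepExp s t' k := by grind [stepExp]
      have hd' : stepExp s' t' k = stepExp s' t k := by grind [stepExp]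
      rw [← hd, ← hd']
      exact (hσ k hk y x).1 hkI

lemma common_slope_or_crossing_left (hG : HasSlopes p n (stepExp s t) (stepExp s' t') L G)
    (hp : p ≠ 0) (hunit : ∀ a, p ∣ a ∨ ∃ u : Rˣ, p ∣ a - u) (hs' : 1 ≤ s') (hs's : s' < s)
    (hst' : s < t') (ht't : t' < t) (ht : t ≤ n) :
    (∃ c, ∀ k ≤ n, L k = slopeLattice p (stepExp s t k) (stepExp s' t' k) (p ^ 2 * c)) ∨
      ∃ σ : (R × R) ≃ₗ[R] (R × R), ∀ k ≤ n, ∀ x y,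
        σ (x, y) ∈ L k ↔ p ^ stepExp s' s k ∣ x ∧ p ^ stepExp t' t k ∣ y := by
  refine (hG.common_slope_or_exchange hp hunit (ε := 1) (I := Set.Ico s t') (k₀ := 0) (k₁ := s)
    (by grind [stepExp]) (by omega) (by grind) (by omega) (by omega) (fun k _ hkI => ⟨?_, ?_⟩)
    (fun k hkI _ => ⟨?_, ?_⟩) ?_).imp_right ?_
  · grind [stepExp]
  · unfold JoinedAbove slopePrecision
    by_cases hk' : t' ≤ k
    · exact .inr fun _ _ _ => by grind [stepExp]
    · exact .inl fun _ _ _ => by grind [stepExp]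
  · grind [stepExp]
  · exact .inl fun _ _ _ => by grind [stepExp, slopePrecision]
  · exact .inl fun _ _ _ => by grind [stepExp, slopePrecision]
  · rintro ⟨σ, hσ⟩
    refine ⟨σ, fun k hk x y => ?_⟩
    by_cases hkI : k ∈ Set.Ico s t'
    · have hd : stepExp s t k - 1 = stepExp t' t k := by grind [stepExp]
      have hd' : stepExp s' t' k + 1 = stepExp s' s k := by grind [stepExp]
      rw [← hd, ← hd']
      exact (hσ k hk x y).2 hkI
    · have hd : stepExp s t k = stepExp t' t k := by grind [stepExp]
      have hd' : stepExp s' t' k = stepExp s' s k := by grind [stepExp]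
      rw [← hd, ← hd']
      exact (hσ k hk x y).1 hkI

end HasSlopes

lemma IsRankTwoExtension.split_or_crossing {R V : Type*} [CommRing R] [IsDomain R] [AddCommGroup V]
    [Module R V] {p : R} {n s t s' t' : ℕ} {L : ℕ → Submodule R V} {i : R →ₗ[R] V} {π : V →ₗ[R] R}
    (hL : IsRankTwoExtension p n (stepExp s t) (stepExp s' t') L i π) (hp : Prime p)
    (hunit : ∀ a, p ∣ a ∨ ∃ u : Rˣ, p ∣ a - u) (hs : 1 ≤ s) (hst : s < t) (ht : t ≤ n)
    (hs' : 1 ≤ s') (hst' : s' < t') (ht' : t' ≤ n) :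
    (∃ w, π w = 1 ∧ ∀ k ≤ n, p ^ stepExp s' t' k • w ∈ L k) ∨
    (s < s' ∧ s' < t ∧ t < t' ∧ ∃ σ : (R × R) ≃ₗ[R] V, ∀ k ≤ n, ∀ x y,
      σ (x, y) ∈ L k ↔ p ^ stepExp s t' k ∣ x ∧ p ^ stepExp s' t k ∣ y) ∨
    (s' < s ∧ s < t' ∧ t' < t ∧ ∃ σ : (R × R) ≃ₗ[R] V, ∀ k ≤ n, ∀ x y,
      σ (x, y) ∈ L k ↔ p ^ stepExp s' s k ∣ x ∧ p ^ stepExp t' t k ∣ y) := by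
  obtain ⟨e, he, hLe⟩ := hL.exists_equiv
  obtain ⟨G, hG⟩ := hLe.exists_hasSlopes hp
  have split (h : ∃ c, ∀ k ≤ n, (L k).comap e.toLinearMap =
      slopeLattice p (stepExp s t k) (stepExp s' t' k) (p ^ 2 * c)) :
      ∃ w, π w = 1 ∧ ∀ k ≤ n, p ^ stepExp s' t' k • w ∈ L k := by
    obtain ⟨c, hc⟩ := h
    refine ⟨e (c, 1), he _, fun k hk => ?_⟩
    have : p ^ stepExp s' t' k • (c, (1 : R)) ∈ (L k).comap e.toLinearMap := by
      rw [hc k hk, mem_slopeLattice]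
      refine ⟨by simp, ?_⟩
      convert dvd_zero _ using 1
      simp only [Prod.smul_mk, smul_eq_mul]
      ring
    rwa [Submodule.mem_comap, map_smul] at this
  by_cases right : s < s' ∧ s' < t ∧ t < t'
  · obtain ⟨hss', hs't, htt'⟩ := right
    refine (hG.common_slope_or_crossing_right hp.ne_zero hunit hs hss' hs't htt' ht').imp split ?_
    rintro ⟨σ, hσ⟩
    exact .inl ⟨hss', hs't, htt', σ.trans e, hσ⟩
  by_cases left : s' < s ∧ s < t' ∧ t' < t
  · obtain ⟨hs's, hst', ht't⟩ := left
    refine (hG.common_slope_or_crossing_left hp.ne_zero hunit hs' hs's hst' ht't ht).imp split ?_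
    rintro ⟨σ, hσ⟩
    exact .inr ⟨hs's, hst', ht't, σ.trans e, hσ⟩
  · exact .inl (split (hG.exists_common_slope_of_noncrossing hs hst ht hs' hst' (by omega)))

end Split

section TiledOrder

variable {K : Type*} [Field K] {n : ℕ}

/-- The subalgebra `Λ` is the tiled order of all matrices whose `(i, j)` entry lies in
`x ^ c_{ij} K[x]`. -/
class IsTiledOrder (Λ : Subalgebra K[X] (Matrix (Fin n) (Fin n) (RatFunc K))) : Prop where
  coe_eq : (Λ : Set (Matrix (Fin n) (Fin n) (RatFunc K))) = lambdaCarrier K n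

lemma neg_one_le_cExp (i j : Fin n) : -1 ≤ cExp n i j := by
  unfold cExp; split_ifs <;> omega

lemma cExp_self_nonpos (k : Fin n) : cExp n k k ≤ 0 := by
  unfold cExp; split_ifs <;> omega

lemma cExp_le_two (i j : Fin n) : cExp n i j ≤ 2 := by
  unfold cExp; split_ifs <;> omega

lemma cExp_zero_nonpos [NeZero n] (k : Fin n) : cExp n 0 k ≤ 0 := by
  unfold cExp; simp only [Fin.val_zero]; split_ifs <;> omega

lemma mem_xPow_iff {c : ℤ} {f : RatFunc K} :
    f ∈ xPow K c ↔ ∃ p, algebraMap K[X] (RatFunc K) p = RatFunc.X ^ (-c) * f := by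
  refine exists_congr fun p => ?_
  rw [_root_.zpow_neg, eq_inv_mul_iff_mul_eq₀ (zpow_ne_zero c RatFunc.X_ne_zero), eq_comm]

lemma algebraMap_X_pow (e : ℕ) :
    algebraMap K[X] (RatFunc K) (X ^ e) = RatFunc.X ^ (e : ℤ) := by
  rw [map_pow, RatFunc.algebraMap_X, zpow_natCast]

lemma xPow_antitone {c d : ℤ} (h : c ≤ d) : xPow K d ⊆ xPow K c := by
  rintro _ ⟨p, rfl⟩
  obtain ⟨e, rfl⟩ := Int.le.dest h
  refine ⟨X ^ e * p, ?_⟩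
  rw [zpow_add₀ RatFunc.X_ne_zero, map_mul, algebraMap_X_pow, mul_assoc]

variable (Λ : Subalgebra K[X] (Matrix (Fin n) (Fin n) (RatFunc K))) [IsTiledOrder Λ]

variable {Λ} in
lemma exists_algebraMap_eq_X_mul (l : Λ) : ∃ q : Fin n → Fin n → K[X], ∀ i j,
    algebraMap K[X] (RatFunc K) (q i j) = RatFunc.X * l.1 i j := by
  have hl : l.1 ∈ lambdaCarrier K n := IsTiledOrder.coe_eq (Λ := Λ) ▸ l.2
  have entry (i j : Fin n) : ∃ p, algebraMap K[X] (RatFunc K) p = RatFunc.X * l.1 i j := by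
    simpa using mem_xPow_iff.1 (xPow_antitone (neg_one_le_cExp i j) (hl i j))
  choose q hq using entry
  exact ⟨q, hq⟩

/-- The element of `Λ` with `x ^ m` at the position `(i, j)` and zeros elsewhere. -/
def matUnit (i j : Fin n) (m : ℤ) (h : cExp n i j ≤ m) : Λ :=
  ⟨Matrix.single i j (RatFunc.X ^ m), by
    rw [← SetLike.mem_coe, IsTiledOrder.coe_eq]
    intro a b
    by_cases hab : i = a ∧ j = b
    · obtain ⟨rfl, rfl⟩ := hab
      exact xPow_antitone h ⟨1, by simp⟩
    · exact ⟨0, by simp [Matrix.single_apply_of_ne _ _ _ _ _ hab]⟩⟩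

lemma matUnit_mul_matUnit {i j k : Fin n} {a b c : ℤ} (ha : cExp n i j ≤ a) (hb : cExp n j k ≤ b)
    (hc : cExp n i k ≤ c) (habc : a + b = c) :
    matUnit Λ i j a ha * matUnit Λ j k b hb = matUnit Λ i k c hc := by
  subst habc
  refine Subtype.ext ((Matrix.single_mul_single_same _ _ _ _ _).trans ?_)
  rw [← zpow_add₀ RatFunc.X_ne_zero]
  rfl

lemma matUnit_mul_matUnit_of_ne {i j j' k : Fin n} {a b : ℤ} (ha : cExp n i j ≤ a)
    (hb : cExp n j' k ≤ b) (h : j ≠ j') : matUnit Λ i j a ha * matUnit Λ j' k b hb = 0 :=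
  Subtype.ext (Matrix.single_mul_single_of_ne _ _ _ _ h _)

lemma pow_smul_matUnit {i j : Fin n} {e : ℕ} {a b : ℤ} (ha : cExp n i j ≤ a) (hb : cExp n i j ≤ b)
    (hab : e + a = b) : (X ^ e : K[X]) • matUnit Λ i j a ha = matUnit Λ i j b hb := by
  subst hab
  refine Subtype.ext ((Matrix.smul_single _ _ _ _).trans ?_)
  rw [Algebra.smul_def, algebraMap_X_pow, ← zpow_add₀ RatFunc.X_ne_zero]
  rfl

/-- The diagonal matrix unit at `k`. -/
def diagUnit (k : Fin n) : Λ := matUnit Λ k k 0 (cExp_self_nonpos k)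

lemma sum_diagUnit : ∑ k, diagUnit Λ k = 1 := by
  refine Subtype.ext ?_
  rw [AddSubmonoidClass.coe_finsetSum]
  simpa [diagUnit, matUnit] using Matrix.sum_single_one (m := Fin n) (α := RatFunc K)

variable [NeZero n]

/-- The matrix unit at `(1, k + 1)` for `k < n`, whose image is the `k`-th row of a `Λ`-module
viewed inside the first row. At `k = n` the lattice chain of rows is closed up by `x ^ 2` times the
first row. -/
def rowUnit (k : ℕ) : Λ :=
  if h : k < n then matUnit Λ 0 ⟨k, h⟩ 0 (cExp_zero_nonpos _) else matUnit Λ 0 0 2 (cExp_le_two _ _)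

lemma rowUnit_of_lt {k : ℕ} (h : k < n) :
    rowUnit Λ k = matUnit Λ 0 ⟨k, h⟩ 0 (cExp_zero_nonpos _) := dif_pos h

lemma rowUnit_zero : rowUnit Λ 0 = matUnit Λ 0 0 0 (cExp_zero_nonpos 0) :=
  rowUnit_of_lt Λ (NeZero.pos n)

lemma rowUnit_last : rowUnit Λ n = matUnit Λ 0 0 2 (cExp_le_two _ _) := dif_neg (lt_irrefl n)

lemma rowUnit_last_eq_smul : rowUnit Λ n = (X ^ 2 : K[X]) • rowUnit Λ 0 := by
  rw [rowUnit_last, rowUnit_zero]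
  exact (pow_smul_matUnit Λ _ _ (add_zero _)).symm

lemma rowUnit_zero_mul (k : ℕ) : rowUnit Λ 0 * rowUnit Λ k = rowUnit Λ k := by
  rw [rowUnit_zero, rowUnit]
  split_ifs with h
  · exact matUnit_mul_matUnit Λ _ _ _ (add_zero 0)
  · exact matUnit_mul_matUnit Λ _ _ _ (zero_add 2)

lemma rowUnit_mul_diagUnit (k j : Fin n) :
    rowUnit Λ k * diagUnit Λ j = if j = k then rowUnit Λ k else 0 := by
  rw [rowUnit_of_lt Λ k.2]
  split_ifs with h
  · subst h
    exact matUnit_mul_matUnit Λ _ _ _ (add_zero 0)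
  · exact matUnit_mul_matUnit_of_ne Λ _ _ (Ne.symm h)

lemma exists_sq_smul_diagUnit_eq (k : Fin n) :
    ∃ q, (X ^ 2 : K[X]) • diagUnit Λ k = q * rowUnit Λ k := by
  refine ⟨matUnit Λ k 0 2 (cExp_le_two k 0), ?_⟩
  rw [rowUnit_of_lt Λ k.2, diagUnit, pow_smul_matUnit Λ _ (cExp_le_two k k) (add_zero _),
    matUnit_mul_matUnit Λ _ _ _ (add_zero 2)]

lemma exists_mul_eq_rowUnit {k : ℕ} (hk : k ≤ n) :
    ∃ e q, rowUnit Λ k * e = rowUnit Λ k ∧ (X ^ 2 : K[X]) • e = q * rowUnit Λ k := by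
  obtain hk | rfl := hk.lt_or_eq
  · obtain ⟨q, hq⟩ := exists_sq_smul_diagUnit_eq Λ ⟨k, hk⟩
    exact ⟨_, q, by simpa using rowUnit_mul_diagUnit Λ ⟨k, hk⟩ ⟨k, hk⟩, hq⟩
  · refine ⟨rowUnit Λ 0, 1, ?_, by rw [one_mul, rowUnit_last_eq_smul]⟩
    rw [rowUnit_last_eq_smul, smul_mul_assoc, rowUnit_zero_mul]

lemma exists_rowUnit_succ_eq {k : ℕ} (hk : k < n) : ∃ y, rowUnit Λ (k + 1) = rowUnit Λ k * y := by
  rw [rowUnit_of_lt Λ hk]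
  obtain hk' | rfl := (show k + 1 ≤ n from hk).lt_or_eq
  · have hc : cExp n ⟨k, hk⟩ ⟨k + 1, hk'⟩ ≤ 0 := by
      unfold cExp; simp only; split_ifs <;> omega
    rw [rowUnit_of_lt Λ hk']
    exact ⟨matUnit Λ _ _ 0 hc, (matUnit_mul_matUnit Λ _ _ _ (add_zero 0)).symm⟩
  · rw [rowUnit_last]
    exact ⟨matUnit Λ _ 0 2 (cExp_le_two _ _), (matUnit_mul_matUnit Λ _ _ _ (zero_add 2)).symm⟩

lemma exists_X_smul_rowUnit_eq {k : ℕ} (hk : k < n) :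
    ∃ z, (X : K[X]) • rowUnit Λ k = rowUnit Λ (k + 1) * z := by
  have hc₀ : cExp n 0 ⟨k, hk⟩ ≤ 1 := (cExp_zero_nonpos _).trans zero_le_one
  rw [rowUnit_of_lt Λ hk, ← pow_one (X : K[X]), pow_smul_matUnit Λ _ hc₀ (by simp)]
  obtain hk' | rfl := (show k + 1 ≤ n from hk).lt_or_eq
  · have hc : cExp n ⟨k + 1, hk'⟩ ⟨k, hk⟩ ≤ 1 := by
      unfold cExp; simp only; split_ifs <;> omega
    rw [rowUnit_of_lt Λ hk']
    exact ⟨matUnit Λ _ _ 1 hc, (matUnit_mul_matUnit Λ _ _ _ (zero_add 1)).symm⟩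
  · have hc : cExp (k + 1) 0 ⟨k, hk⟩ ≤ -1 := by simp [cExp]
    rw [rowUnit_last]
    exact ⟨matUnit Λ 0 _ (-1) hc, (matUnit_mul_matUnit Λ _ _ _ (by norm_num)).symm⟩

variable {Λ} in
lemma X_smul_rowUnit_mul_eq_sum {l : Λ} {q : Fin n → Fin n → K[X]}
    (hq : ∀ i j, algebraMap K[X] (RatFunc K) (q i j) = RatFunc.X * l.1 i j) (k : Fin n) :
    (X : K[X]) • (rowUnit Λ k * l) = ∑ j : Fin n, q k j • rowUnit Λ j := by
  refine Subtype.ext ?_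
  rw [AddSubmonoidClass.coe_finsetSum]
  simp only [rowUnit_of_lt Λ (Fin.is_lt _), Fin.eta, matUnit, zpow_zero, Subalgebra.coe_smul,
    Subalgebra.coe_mul, Matrix.smul_single]
  ext a b
  rw [Matrix.sum_apply, Matrix.smul_apply]
  obtain rfl | ha := eq_or_ne a 0
  · simp [Matrix.single_apply, Algebra.smul_def, hq]
  · simp [Matrix.single_mul_apply_of_ne _ _ _ _ _ ha, ha.symm]

end TiledOrder

section Rows

variable {K : Type*} [Field K] {n : ℕ}
  (Λ : Subalgebra K[X] (Matrix (Fin n) (Fin n) (RatFunc K))) [IsTiledOrder Λ] [NeZero n]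
  (M : Type*) [AddCommGroup M] [Module Λ M] [Module K[X] M] [IsScalarTower K[X] Λ M]

/-- The first row of a `Λ`-module, the image of the matrix unit at `(1, 1)`. -/
def rowSpace : Submodule K[X] M := LinearMap.range (DistribSMul.toLinearMap K[X] M (rowUnit Λ 0))

variable {M} in
lemma mem_rowSpace_iff {u : M} : u ∈ rowSpace Λ M ↔ rowUnit Λ 0 • u = u := by
  refine ⟨?_, fun hu => ⟨u, hu⟩⟩
  rintro ⟨m, rfl⟩
  change rowUnit Λ 0 • rowUnit Λ 0 • m = rowUnit Λ 0 • m
  rw [smul_smul, rowUnit_zero_mul]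

/-- The action of `rowUnit Λ k`, as a map to the first row. -/
def rowProj (k : ℕ) : M →ₗ[K[X]] rowSpace Λ M :=
  (DistribSMul.toLinearMap K[X] M (rowUnit Λ k)).codRestrict _ fun m => by
    rw [mem_rowSpace_iff, DistribSMul.toLinearMap_apply, smul_smul, rowUnit_zero_mul]

/-- The `k`-th row of a `Λ`-module, viewed inside the first row. -/
def rowLattice (k : ℕ) : Submodule K[X] (rowSpace Λ M) := LinearMap.range (rowProj Λ M k)

variable {M} {k : ℕ} (m : M)

@[simp]
lemma coe_rowProj : (rowProj Λ M k m : M) = rowUnit Λ k • m := rfl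

lemma rowProj_mem_rowLattice : rowProj Λ M k m ∈ rowLattice Λ M k := ⟨m, rfl⟩

lemma rowProj_eq_zero_iff : rowProj Λ M k m = 0 ↔ rowUnit Λ k • m = 0 := Subtype.ext_iff

lemma rowProj_zero_coe (u : rowSpace Λ M) : rowProj Λ M 0 u = u :=
  Subtype.ext ((mem_rowSpace_iff Λ).1 u.2)

variable (M) in
lemma isLatticeChain_rowLattice : IsLatticeChain (X : K[X]) n (rowLattice Λ M) where
  zero := Submodule.eq_top_iff'.2 fun u => ⟨u, rowProj_zero_coe Λ u⟩
  succ_le k hk := by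
    rintro _ ⟨m, rfl⟩
    obtain ⟨y, hy⟩ := exists_rowUnit_succ_eq Λ hk
    exact ⟨y • m, Subtype.ext (by simp [smul_smul, hy])⟩
  smul_mem k hk := by
    rintro _ ⟨m, rfl⟩
    obtain ⟨z, hz⟩ := exists_X_smul_rowUnit_eq Λ hk
    exact ⟨z • m, Subtype.ext (by simp [smul_smul, ← hz])⟩
  mem_last u := by
    have last (m : M) : rowProj Λ M n m = (X : K[X]) ^ 2 • rowProj Λ M 0 m :=
      Subtype.ext (by simp [rowUnit_last_eq_smul])
    constructor
    · rintro ⟨m, rfl⟩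
      exact ⟨_, (last m).symm⟩
    · rintro ⟨v, rfl⟩
      exact ⟨v, by rw [last, rowProj_zero_coe]⟩

end Rows

section RowModel

variable {K : Type*} [Field K] {n : ℕ}

/-- A description of a `Λ`-module `M` by its rows: the maps `π k` identify `M` with the product of
the submodules `L k` of `V`, and `Λ` acts by matrix multiplication. The entries of `Λ` need not be
polynomials, but become so after multiplication by `x`. -/
structure IsRowModel (Λ : Subalgebra K[X] (Matrix (Fin n) (Fin n) (RatFunc K)))
    {M V : Type*} [AddCommGroup M] [Module Λ M] [AddCommGroup V] [Module K[X] V]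
    (L : ℕ → Submodule K[X] V) (π : Fin n → M →+ V) : Prop where
  eq_zero : ∀ m, (∀ k, π k m = 0) → m = 0
  exists_iff : ∀ u : Fin n → V, (∃ m, ∀ k, π k m = u k) ↔ ∀ k : Fin n, u k ∈ L k
  X_smul_map_smul : ∀ (l : Λ) (q : Fin n → Fin n → K[X]),
    (∀ i j, algebraMap K[X] (RatFunc K) (q i j) = RatFunc.X * l.1 i j) →
      ∀ k m, (X : K[X]) • π k (l • m) = ∑ j, q k j • π j m

namespace IsRowModel

variable {Λ : Subalgebra K[X] (Matrix (Fin n) (Fin n) (RatFunc K))}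
  {M N V W : Type*} [AddCommGroup M] [Module Λ M] [AddCommGroup N] [Module Λ N]
  [AddCommGroup V] [Module K[X] V] [AddCommGroup W] [Module K[X] W]
  {L : ℕ → Submodule K[X] V} {L' : ℕ → Submodule K[X] W} {π : Fin n → M →+ V} {π' : Fin n → N →+ W}

lemma mem (hM : IsRowModel Λ L π) (k : Fin n) (m : M) : π k m ∈ L k :=
  (hM.exists_iff fun k => π k m).1 ⟨m, fun _ => rfl⟩ k

lemma ext (hM : IsRowModel Λ L π) {m m' : M} (h : ∀ k, π k m = π k m') : m = m' :=
  sub_eq_zero.1 (hM.eq_zero _ fun k => by rw [map_sub, h, sub_self])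

lemma prod (hM : IsRowModel Λ L π) (hN : IsRowModel Λ L' π') :
    IsRowModel Λ (fun k => (L k).prod (L' k)) fun k => (π k).prodMap (π' k) where
  eq_zero m hm := Prod.ext (hM.eq_zero _ fun k => congrArg Prod.fst (hm k))
    (hN.eq_zero _ fun k => congrArg Prod.snd (hm k))
  exists_iff u := by
    simp only [Submodule.mem_prod, forall_and, ← hM.exists_iff fun k => (u k).1,
      ← hN.exists_iff fun k => (u k).2, Prod.exists, AddMonoidHom.prodMap_def]
    simp [Prod.ext_iff, forall_and]
  X_smul_map_smul l q hq k m := Prod.ext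
    (by simpa [Prod.fst_sum] using hM.X_smul_map_smul l q hq k m.1)
    (by simpa [Prod.snd_sum] using hN.X_smul_map_smul l q hq k m.2)

variable [IsTiledOrder Λ]

lemma exists_lift (hM : IsRowModel Λ L π) (hN : IsRowModel Λ L' π')
    (hW : IsSMulRegular W (X : K[X])) (ψ : V →ₗ[K[X]] W)
    (hψ : ∀ k : Fin n, (L k).map ψ ≤ L' k) : ∃ Ψ : M →ₗ[Λ] N, ∀ k m, π' k (Ψ m) = ψ (π k m) := by
  have exists_image (m : M) : ∃ m', ∀ k, π' k m' = ψ (π k m) :=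
    (hN.exists_iff _).2 fun k => hψ k (Submodule.mem_map_of_mem (hM.mem k m))
  choose F hF using exists_image
  refine ⟨⟨⟨F, fun m m' => hN.ext fun k => by simp [hF]⟩,
    fun l m => hN.ext fun k => hW ?_⟩, fun k m => hF m k⟩
  obtain ⟨q, hq⟩ := exists_algebraMap_eq_X_mul l
  simp only [RingHom.id_apply, hF, hN.X_smul_map_smul l q hq]
  rw [← map_smul, hM.X_smul_map_smul l q hq, map_sum]
  simp only [map_smul]

lemma nonempty_linearEquiv (hM : IsRowModel Λ L π) (hN : IsRowModel Λ L' π')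
    (hW : IsSMulRegular W (X : K[X])) {ψ : V →ₗ[K[X]] W} (hψ : Function.Injective ψ)
    (hL : ∀ k : Fin n, (L k).map ψ = L' k) : Nonempty (M ≃ₗ[Λ] N) := by
  obtain ⟨Ψ, hΨ⟩ := hM.exists_lift hN hW ψ fun k => (hL k).le
  refine ⟨.ofBijective Ψ ⟨(injective_iff_map_eq_zero Ψ).2 fun m hm => ?_, fun m' => ?_⟩⟩
  · exact hM.eq_zero m fun k => hψ (by rw [← hΨ, hm, map_zero, map_zero])
  · have exists_preimage (k : Fin n) : ∃ u ∈ L k, ψ u = π' k m' := by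
      have := hN.mem k m'
      rwa [← hL k] at this
    choose u hu hψu using exists_preimage
    obtain ⟨m, hm⟩ := (hM.exists_iff u).2 hu
    exact ⟨m, hN.ext fun k => by rw [hΨ, hm, hψu]⟩

end IsRowModel

variable (Λ : Subalgebra K[X] (Matrix (Fin n) (Fin n) (RatFunc K)))

lemma isRowModel_of_coe_eq_ijSet {i j : ℕ} (E : Submodule Λ (Fin n → RatFunc K))
    (hE : (E : Set (Fin n → RatFunc K)) = ijSet K n i j) :
    IsRowModel Λ (M := E)
      (fun k => Submodule.map (Algebra.linearMap K[X] (RatFunc K)) (.span _ {X ^ stepExp i j k}))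
      fun k => (Pi.evalAddMonoidHom _ k).comp E.subtype.toAddMonoidHom where
  eq_zero m hm := Subtype.ext (funext hm)
  exists_iff u := by
    have mem_map_iff (k : Fin n) : u k ∈ Submodule.map (Algebra.linearMap K[X] (RatFunc K))
        (.span _ {X ^ stepExp i j k}) ↔ u k ∈ xPow K (dExp i j k) := by
      rw [Submodule.map_span, Set.image_singleton, Submodule.mem_span_singleton]
      refine exists_congr fun p => ?_
      rw [dExp_eq_stepExp, Algebra.linearMap_apply, algebraMap_X_pow, Algebra.smul_def, mul_comm,
        eq_comm]
    simp only [mem_map_iff]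
    change _ ↔ u ∈ ijSet K n i j
    rw [← hE]
    refine ⟨?_, fun hu => ⟨⟨u, hu⟩, fun k => rfl⟩⟩
    rintro ⟨m, hm⟩
    exact (funext hm : m.1 = u) ▸ m.2
  X_smul_map_smul l q hq k m := by
    change (X : K[X]) • ∑ j, l.1 k j * m.1 j = ∑ j, q k j • m.1 j
    rw [Finset.smul_sum]
    simp only [Algebra.smul_def, hq, RatFunc.algebraMap_X, mul_assoc]

variable [IsTiledOrder Λ] [NeZero n]
  (M : Type*) [AddCommGroup M] [Module Λ M] [Module K[X] M] [IsScalarTower K[X] Λ M]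

variable {M} in
lemma eq_zero_of_forall_rowProj_eq_zero (hX : IsSMulRegular M (X : K[X])) {m : M}
    (hm : ∀ k : Fin n, rowProj Λ M k m = 0) : m = 0 := by
  refine (hX.pow 2).right_eq_zero_of_smul ?_
  have diag (k : Fin n) : ((X ^ 2 : K[X]) • diagUnit Λ k) • m = 0 := by
    obtain ⟨q, hq⟩ := exists_sq_smul_diagUnit_eq Λ k
    rw [hq, mul_smul, (rowProj_eq_zero_iff Λ m).1 (hm k), smul_zero]
  rw [← one_smul Λ m, ← sum_diagUnit Λ, ← smul_assoc, Finset.smul_sum, Finset.sum_smul]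
  exact Finset.sum_eq_zero fun k _ => diag k

lemma isRowModel_rowProj (hX : IsSMulRegular M (X : K[X])) :
    IsRowModel Λ (rowLattice Λ M) fun k => (rowProj Λ M k).toAddMonoidHom where
  eq_zero m hm := eq_zero_of_forall_rowProj_eq_zero Λ hX hm
  exists_iff u := by
    refine ⟨fun ⟨m, hm⟩ k => hm k ▸ rowProj_mem_rowLattice Λ m, fun hu => ?_⟩
    choose m hm using hu
    refine ⟨∑ j, diagUnit Λ j • m j, fun k => Subtype.ext ?_⟩
    simp [smul_smul, rowUnit_mul_diagUnit, ite_smul, ← hm]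
  X_smul_map_smul l q hq k m := by
    refine Subtype.ext ?_
    have := congrArg (· • m) (X_smul_rowUnit_mul_eq_sum hq k)
    simpa [Finset.sum_smul, mul_smul] using this

end RowModel

section ModuleTheory

lemma eq_id_of_isIdempotentElem {R M : Type*} [Ring R] [AddCommGroup M] [Module R M]
    (hM : ¬ ∃ Y Z : Submodule R M, IsCompl Y Z ∧ Y ≠ ⊥ ∧ Z ≠ ⊥) {P : M →ₗ[R] M}
    (hP : IsIdempotentElem P) (hP₀ : P ≠ 0) : P = LinearMap.id := by
  have hker : LinearMap.ker P = ⊥ := by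
    by_contra hker
    exact hM ⟨_, _, LinearMap.IsIdempotentElem.isCompl hP,
      LinearMap.range_eq_bot.not.2 hP₀, hker⟩
  exact LinearMap.ext fun m => LinearMap.ker_eq_bot.1 hker (LinearMap.congr_fun hP.eq m)

lemma map_smulRight_le {R V W : Type*} [CommRing R] [AddCommGroup V] [Module R V]
    [AddCommGroup W] [Module R W] {a : R} {φ : V →ₗ[R] R} {w : W} {L : Submodule R V}
    {L' : Submodule R W} (hφ : ∀ u ∈ L, a ∣ φ u) (hw : a • w ∈ L') :
    L.map (φ.smulRight w) ≤ L' := by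
  rintro _ ⟨u, hu, rfl⟩
  obtain ⟨c, hc⟩ := hφ u hu
  rw [LinearMap.smulRight_apply, hc, mul_comm, mul_smul]
  exact L'.smul_mem c hw

lemma isSMulRegular_of_exact {R Λ A B C : Type*} [CommRing R] [Ring Λ] [Algebra R Λ]
    [AddCommGroup A] [Module Λ A] [Module R A] [IsScalarTower R Λ A]
    [AddCommGroup B] [Module Λ B] [Module R B] [IsScalarTower R Λ B]
    [AddCommGroup C] [Module Λ C] [Module R C] [IsScalarTower R Λ C]
    {f : A →ₗ[Λ] B} {g : B →ₗ[Λ] C} {r : R} (hf : Function.Injective f)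
    (hfg : LinearMap.range f = LinearMap.ker g) (hA : IsSMulRegular A r)
    (hC : IsSMulRegular C r) : IsSMulRegular B r :=
  isSMulRegular_of_range_eq_ker (f := f.restrictScalars R) (g := g.restrictScalars R) hf
    (by rw [LinearMap.range_restrictScalars, LinearMap.ker_restrictScalars, hfg]) hA hC

lemma dvd_or_exists_unit_dvd_sub {K : Type*} [Field K] (a : K[X]) :
    X ∣ a ∨ ∃ u : K[X]ˣ, (X : K[X]) ∣ a - u := by
  refine or_iff_not_imp_left.2 fun ha => ?_
  rw [X_dvd_iff] at ha
  exact ⟨Units.map C.toMonoidHom (.mk0 _ ha), X_dvd_iff.2 (by simp)⟩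

end ModuleTheory

section RowCoord

variable {K : Type*} [Field K] {n : ℕ} [NeZero n]
  {Λ : Subalgebra K[X] (Matrix (Fin n) (Fin n) (RatFunc K))} [IsTiledOrder Λ]
  {M : Type*} [AddCommGroup M] [Module Λ M] [Module K[X] M] [IsScalarTower K[X] Λ M]

/-- The coordinate `θ` on the first row of `M` identifies all rows of `M` with those of the
module `(i, j)`. -/
def IsRowCoord (i j : ℕ) (θ : rowSpace Λ M ≃ₗ[K[X]] K[X]) : Prop :=
  ∀ k ≤ n, ∀ u, u ∈ rowLattice Λ M k ↔ X ^ stepExp i j k ∣ θ u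

lemma isSMulRegular_rowSpace (hX : IsSMulRegular M (X : K[X])) :
    IsSMulRegular (rowSpace Λ M) (X : K[X]) := hX.submodule _ _

lemma exists_idempotent_of_summand (hX : IsSMulRegular M (X : K[X])) {a b : ℕ}
    {φ : rowSpace Λ M →ₗ[K[X]] K[X]} {v : rowSpace Λ M} (hφv : φ v = 1)
    (hv : ∀ k ≤ n, (X : K[X]) ^ stepExp a b k • v ∈ rowLattice Λ M k)
    (hφ : ∀ k ≤ n, ∀ u ∈ rowLattice Λ M k, X ^ stepExp a b k ∣ φ u) :
    ∃ P : M →ₗ[Λ] M, IsIdempotentElem P ∧ ∀ k m, k < n →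
      rowProj Λ M k (P m) = φ (rowProj Λ M k m) • v := by
  have hM := isRowModel_rowProj Λ M hX
  obtain ⟨P, hP⟩ := hM.exists_lift hM (isSMulRegular_rowSpace hX) (φ.smulRight v) fun k =>
    map_smulRight_le (hφ k k.2.le) (hv k k.2.le)
  refine ⟨P, LinearMap.ext fun m => hM.ext fun k => ?_, fun k m hk => hP ⟨k, hk⟩ m⟩
  simp [Module.End.mul_apply, hP, hφv]

variable (Λ M) in
lemma exists_isRowCoord [Module.Finite K[X] M] [NoZeroSMulDivisors K[X] M] [Nontrivial M]
    (hM : ¬ ∃ Y Z : Submodule Λ M, IsCompl Y Z ∧ Y ≠ ⊥ ∧ Z ≠ ⊥) :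
    ∃ (a b : ℕ) (θ : rowSpace Λ M ≃ₗ[K[X]] K[X]), 1 ≤ a ∧ a < b ∧ b ≤ n ∧ IsRowCoord a b θ := by
  have hX : IsSMulRegular M (X : K[X]) := .of_ne_zero X_ne_zero
  have : Nontrivial (rowSpace Λ M) := by
    by_contra h
    rw [not_nontrivial_iff_subsingleton] at h
    obtain ⟨m, hm⟩ := exists_ne (0 : M)
    exact hm (eq_zero_of_forall_rowProj_eq_zero Λ hX fun k => Subsingleton.elim _ _)
  obtain ⟨a, b, φ, v, ha, hab, hb, hφv, hv, hφ⟩ :=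
    (isLatticeChain_rowLattice Λ M).exists_summand prime_X
  obtain ⟨P, hP, hPφ⟩ := exists_idempotent_of_summand hX hφv hv hφ
  have rowProj_zero_map (u : rowSpace Λ M) : rowProj Λ M 0 (P u) = φ u • v := by
    rw [hPφ 0 u (NeZero.pos n), rowProj_zero_coe]
  have hP₀ : P ≠ 0 := by
    rintro rfl
    have hv₀ : 0 = v := by simpa [hφv] using rowProj_zero_map v
    simp [← hv₀] at hφv
  have hφu (u : rowSpace Λ M) : φ u • v = u := by
    rw [← rowProj_zero_map, eq_id_of_isIdempotentElem hM hP hP₀, LinearMap.id_apply,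
      rowProj_zero_coe]
  refine ⟨a, b, .ofLinearMap φ (LinearMap.toSpanSingleton K[X] _ v) (by ext; simp [hφv])
    (by ext u; simp [hφu]), ha, hab, hb, fun k hk u => ⟨hφ k hk u, ?_⟩⟩
  rintro ⟨c, hc⟩
  rw [← hφu u, show φ u = X ^ stepExp a b k * c from hc, mul_comm, mul_smul]
  exact Submodule.smul_mem _ _ (hv k hk)

lemma IsRowCoord.nonempty_linearEquiv {i j : ℕ} {θ : rowSpace Λ M ≃ₗ[K[X]] K[X]}
    (hθ : IsRowCoord i j θ) (hX : IsSMulRegular M (X : K[X]))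
    (E : Submodule Λ (Fin n → RatFunc K))
    (hE : (E : Set (Fin n → RatFunc K)) = ijSet K n i j) : Nonempty (M ≃ₗ[Λ] E) := by
  refine (isRowModel_rowProj Λ M hX).nonempty_linearEquiv (isRowModel_of_coe_eq_ijSet Λ E hE)
    (.of_ne_zero X_ne_zero) (ψ := Algebra.linearMap K[X] (RatFunc K) ∘ₗ θ.toLinearMap)
    ((RatFunc.algebraMap_injective K).comp θ.injective) fun k => ?_
  rw [Submodule.map_comp]
  congr 1
  ext q
  rw [Submodule.mem_map_equiv, hθ k k.2.le, Ideal.mem_span_singleton, θ.apply_symm_apply]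

end RowCoord

section RowMap

variable {K : Type*} [Field K] {n : ℕ} [NeZero n]
  {Λ : Subalgebra K[X] (Matrix (Fin n) (Fin n) (RatFunc K))} [IsTiledOrder Λ]
  {A : Type*} [AddCommGroup A] [Module Λ A] [Module K[X] A] [IsScalarTower K[X] Λ A]
  {B : Type*} [AddCommGroup B] [Module Λ B] [Module K[X] B] [IsScalarTower K[X] Λ B]
  {C : Type*} [AddCommGroup C] [Module Λ C] [Module K[X] C] [IsScalarTower K[X] Λ C]

/-- The map of first rows induced by a `Λ`-linear map. -/
def rowMap (f : A →ₗ[Λ] B) : rowSpace Λ A →ₗ[K[X]] rowSpace Λ B :=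
  (f.restrictScalars K[X]).restrict fun u hu => by
    rw [mem_rowSpace_iff] at hu ⊢
    rw [LinearMap.restrictScalars_apply, ← map_smul, hu]

lemma rowMap_rowProj (f : A →ₗ[Λ] B) (k : ℕ) (m : A) :
    rowMap f (rowProj Λ A k m) = rowProj Λ B k (f m) := Subtype.ext (map_smul f _ m)

lemma rowMap_mem_rowLattice (f : A →ₗ[Λ] B) {k : ℕ} {u : rowSpace Λ A}
    (hu : u ∈ rowLattice Λ A k) : rowMap f u ∈ rowLattice Λ B k := by
  obtain ⟨a, rfl⟩ := hu
  exact ⟨f a, (rowMap_rowProj f k a).symm⟩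

lemma exists_rowMap_eq_of_surjective {g : B →ₗ[Λ] C} (hg : Function.Surjective g) {k : ℕ}
    {u : rowSpace Λ C} (hu : u ∈ rowLattice Λ C k) : ∃ v ∈ rowLattice Λ B k, rowMap g v = u := by
  obtain ⟨c, rfl⟩ := hu
  obtain ⟨b, rfl⟩ := hg c
  exact ⟨rowProj Λ B k b, rowProj_mem_rowLattice Λ b, rowMap_rowProj g k b⟩

variable {f : A →ₗ[Λ] B} {g : B →ₗ[Λ] C}

lemma exists_rowMap_eq_of_exact (hC : IsSMulRegular C (X : K[X])) (hfg : Function.Exact f g)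
    {k : ℕ} (hk : k ≤ n) {u : rowSpace Λ B} (hu : u ∈ rowLattice Λ B k) (hgu : rowMap g u = 0) :
    ∃ v ∈ rowLattice Λ A k, rowMap f v = u := by
  obtain ⟨b, rfl⟩ := hu
  obtain ⟨e, q, hrow, hsq⟩ := exists_mul_eq_rowUnit Λ hk
  rw [rowMap_rowProj, rowProj_eq_zero_iff] at hgu
  have hgb : g (e • b) = 0 := by
    refine (hC.pow 2).right_eq_zero_of_smul ?_
    rw [map_smul, ← smul_assoc, hsq, mul_smul, hgu, smul_zero]
  obtain ⟨a, ha⟩ := (hfg _).1 hgb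
  refine ⟨rowProj Λ A k a, rowProj_mem_rowLattice Λ a, ?_⟩
  rw [rowMap_rowProj, ha]
  exact Subtype.ext (by simp [smul_smul, hrow])

lemma rowMap_injective (hf : Function.Injective f) : Function.Injective (rowMap f) :=
  fun _ _ h => Subtype.ext (hf (congrArg Subtype.val h))

lemma rowMap_mem_rowLattice_iff (hC : IsSMulRegular C (X : K[X])) (hf : Function.Injective f)
    (hfg : Function.Exact f g) {k : ℕ} (hk : k ≤ n) {u : rowSpace Λ A} :
    rowMap f u ∈ rowLattice Λ B k ↔ u ∈ rowLattice Λ A k := by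
  refine ⟨fun hu => ?_, rowMap_mem_rowLattice f⟩
  obtain ⟨v, hv, hvu⟩ := exists_rowMap_eq_of_exact hC hfg hk hu
    (Subtype.ext (hfg.apply_apply_eq_zero u))
  exact rowMap_injective hf hvu ▸ hv

lemma exact_rowMap (hC : IsSMulRegular C (X : K[X])) (hfg : Function.Exact f g) :
    Function.Exact (rowMap f) (rowMap g) := by
  refine fun u => ⟨fun hu => ?_, ?_⟩
  · have hu₀ : u ∈ rowLattice Λ B 0 := (isLatticeChain_rowLattice Λ B).zero ▸ trivial
    obtain ⟨v, -, hv⟩ := exists_rowMap_eq_of_exact hC hfg n.zero_le hu₀ hu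
    exact ⟨v, hv⟩
  · rintro ⟨v, rfl⟩
    exact Subtype.ext (hfg.apply_apply_eq_zero v)

lemma rowMap_surjective (hg : Function.Surjective g) : Function.Surjective (rowMap g) := by
  intro u
  have hu₀ : u ∈ rowLattice Λ C 0 := (isLatticeChain_rowLattice Λ C).zero ▸ trivial
  obtain ⟨v, -, hv⟩ := exists_rowMap_eq_of_surjective hg hu₀
  exact ⟨v, hv⟩

variable {s t s' t' : ℕ} {θ : rowSpace Λ A ≃ₗ[K[X]] K[X]} {θ' : rowSpace Λ C ≃ₗ[K[X]] K[X]}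

lemma isRankTwoExtension_rowLattice (hC : IsSMulRegular C (X : K[X]))
    (hf : Function.Injective f) (hg : Function.Surjective g) (hfg : Function.Exact f g)
    (hθ : IsRowCoord s t θ) (hθ' : IsRowCoord s' t' θ') :
    IsRankTwoExtension X n (stepExp s t) (stepExp s' t') (rowLattice Λ B)
      (rowMap f ∘ₗ θ.symm.toLinearMap) (θ'.toLinearMap ∘ₗ rowMap g) where
  toIsLatticeChain := isLatticeChain_rowLattice Λ B
  injective := (rowMap_injective hf).comp θ.symm.injective
  exact u := by
    simp only [LinearMap.comp_apply, LinearEquiv.coe_coe, θ'.map_eq_zero_iff,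
      exact_rowMap hC hfg u, Set.mem_range, θ.symm.surjective.exists]
  surjective := θ'.surjective.comp (rowMap_surjective hg)
  mem_iff k hk β := by
    rw [LinearMap.comp_apply, rowMap_mem_rowLattice_iff hC hf hfg hk, hθ k hk,
      LinearEquiv.coe_coe, θ.apply_symm_apply]
  exists_mem_iff k hk c := by
    constructor
    · rintro ⟨u, hu, rfl⟩
      exact (hθ' k hk _).1 (rowMap_mem_rowLattice g hu)
    · intro hc
      rw [← θ'.apply_symm_apply c, ← hθ' k hk] at hc
      obtain ⟨u, hu, hgu⟩ := exists_rowMap_eq_of_surjective hg hc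
      exact ⟨u, hu, by simp [hgu]⟩

lemma exists_section (hB : IsSMulRegular B (X : K[X])) (hC : IsSMulRegular C (X : K[X]))
    (hθ' : IsRowCoord s' t' θ') {w : rowSpace Λ B} (hw : θ' (rowMap g w) = 1)
    (hwL : ∀ k ≤ n, (X : K[X]) ^ stepExp s' t' k • w ∈ rowLattice Λ B k) :
    ∃ σ : C →ₗ[Λ] B, g ∘ₗ σ = LinearMap.id := by
  have rows := isRowModel_rowProj Λ C hC
  obtain ⟨σ, hσ⟩ := rows.exists_lift (isRowModel_rowProj Λ B hB) (isSMulRegular_rowSpace hB)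
    (θ'.toLinearMap.smulRight w) fun k =>
      map_smulRight_le (fun u hu => (hθ' k k.2.le u).1 hu) (hwL k k.2.le)
  refine ⟨σ, LinearMap.ext fun c => rows.ext fun k => θ'.injective ?_⟩
  change θ' (rowProj Λ C k (g (σ c))) = θ' (rowProj Λ C k c)
  have hσc : rowProj Λ B k (σ c) = θ' (rowProj Λ C k c) • w := hσ k c
  rw [← rowMap_rowProj, hσc, map_smul, map_smul, hw, smul_eq_mul, mul_one]

lemma nonempty_linearEquiv_prod (hB : IsSMulRegular B (X : K[X])) {i j i' j' : ℕ}
    (σ : (K[X] × K[X]) ≃ₗ[K[X]] rowSpace Λ B)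
    (hσ : ∀ k ≤ n, ∀ x y,
      σ (x, y) ∈ rowLattice Λ B k ↔ X ^ stepExp i j k ∣ x ∧ X ^ stepExp i' j' k ∣ y)
    {E E' : Submodule Λ (Fin n → RatFunc K)}
    (hE : (E : Set (Fin n → RatFunc K)) = ijSet K n i j)
    (hE' : (E' : Set (Fin n → RatFunc K)) = ijSet K n i' j') : Nonempty (B ≃ₗ[Λ] (E × E')) := by
  let ι := Algebra.linearMap K[X] (RatFunc K)
  have hι : Function.Injective ι := RatFunc.algebraMap_injective K
  have hX : IsSMulRegular (RatFunc K) (X : K[X]) := .of_ne_zero X_ne_zero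
  refine (isRowModel_rowProj Λ B hB).nonempty_linearEquiv
    ((isRowModel_of_coe_eq_ijSet Λ E hE).prod (isRowModel_of_coe_eq_ijSet Λ E' hE'))
    (Prod.isSMulRegular_iff.2 ⟨hX, hX⟩) (ψ := ι.prodMap ι ∘ₗ σ.symm.toLinearMap)
    ((hι.prodMap hι).comp σ.symm.injective) fun k => ?_
  have comap_eq : (rowLattice Λ B k).map σ.symm.toLinearMap =
      (Submodule.span _ {X ^ stepExp i j k}).prod (Submodule.span _ {X ^ stepExp i' j' k}) := by
    ext ⟨x, y⟩
    rw [Submodule.mem_map_equiv, LinearEquiv.symm_symm, hσ k k.2.le, Submodule.mem_prod,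
      Ideal.mem_span_singleton, Ideal.mem_span_singleton]
  rw [Submodule.map_comp, comap_eq, LinearMap.prodMap_map_prod]

end RowMap

/-- Let `0 → A → B → C → 0` be a non-split short exact sequence of `Λ`-modules with `A` and
`C` indecomposable Cohen–Macaulay. Then either `A ≅ (s,t)`, `B ≅ (s,t') ⊕ (s',t)`,
`C ≅ (s',t')` for some `s < s' < t < t'`, or `A ≅ (s,t)`, `B ≅ (s',s) ⊕ (t',t)`,
`C ≅ (s',t')` for some `s' < s < t' < t`. -/
theorem statement8 (K : Type) [Field K] (n : ℕ) (hn : 3 ≤ n)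
    (Λ : Subalgebra (Polynomial K) (Matrix (Fin n) (Fin n) (RatFunc K)))
    (hΛ : (Λ : Set (Matrix (Fin n) (Fin n) (RatFunc K))) = lambdaCarrier K n)
    (E : ℕ → ℕ → Submodule ↥Λ (Fin n → RatFunc K))
    (hE : ∀ i j : ℕ, 1 ≤ i → i < j → j ≤ n →
      (E i j : Set (Fin n → RatFunc K)) = ijSet K n i j)
    -- the three terms of the sequence
    (A : Type u) [AddCommGroup A] [Module ↥Λ A]
    [Module (Polynomial K) A] [IsScalarTower (Polynomial K) ↥Λ A]
    (B : Type u) [AddCommGroup B] [Module ↥Λ B]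
    (C : Type u) [AddCommGroup C] [Module ↥Λ C]
    [Module (Polynomial K) C] [IsScalarTower (Polynomial K) ↥Λ C]
    -- `A` and `C` are Cohen–Macaulay and indecomposable
    (hAfin : Module.Finite (Polynomial K) A) (hAtf : NoZeroSMulDivisors (Polynomial K) A)
    (hAind : Nontrivial A ∧ ¬ ∃ (X Y : Submodule ↥Λ A), IsCompl X Y ∧ X ≠ ⊥ ∧ Y ≠ ⊥)
    (hCfin : Module.Finite (Polynomial K) C) (hCtf : NoZeroSMulDivisors (Polynomial K) C)
    (hCind : Nontrivial C ∧ ¬ ∃ (X Y : Submodule ↥Λ C), IsCompl X Y ∧ X ≠ ⊥ ∧ Y ≠ ⊥)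
    -- a non-split short exact sequence `0 → A → B → C → 0`
    (f : A →ₗ[↥Λ] B) (g : B →ₗ[↥Λ] C)
    (hf : Function.Injective f) (hg : Function.Surjective g)
    (hexact : LinearMap.range f = LinearMap.ker g)
    (hnonsplit : ¬ ∃ sec : C →ₗ[↥Λ] B, g ∘ₗ sec = LinearMap.id) :
    (∃ s s' t t' : ℕ, 1 ≤ s ∧ s < s' ∧ s' < t ∧ t < t' ∧ t' ≤ n ∧
      Nonempty (A ≃ₗ[↥Λ] ↥(E s t)) ∧
      Nonempty (B ≃ₗ[↥Λ] (↥(E s t') × ↥(E s' t))) ∧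
      Nonempty (C ≃ₗ[↥Λ] ↥(E s' t'))) ∨
    (∃ s' s t' t : ℕ, 1 ≤ s' ∧ s' < s ∧ s < t' ∧ t' < t ∧ t ≤ n ∧
      Nonempty (A ≃ₗ[↥Λ] ↥(E s t)) ∧
      Nonempty (B ≃ₗ[↥Λ] (↥(E s' s) × ↥(E t' t))) ∧
      Nonempty (C ≃ₗ[↥Λ] ↥(E s' t'))) := by
  have : NeZero n := ⟨by omega⟩
  have : IsTiledOrder Λ := ⟨hΛ⟩
  let : Module K[X] B := Module.compHom B (algebraMap K[X] Λ)
  have : IsScalarTower K[X] Λ B := .of_algebraMap_smul fun _ _ => rfl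
  have hXA : IsSMulRegular A (X : K[X]) := .of_ne_zero X_ne_zero
  have hXC : IsSMulRegular C (X : K[X]) := .of_ne_zero X_ne_zero
  have hXB : IsSMulRegular B (X : K[X]) := isSMulRegular_of_exact hf hexact hXA hXC
  have := hAind.1
  have := hCind.1
  obtain ⟨s, t, θ, hs, hst, ht, hθ⟩ := exists_isRowCoord Λ A hAind.2
  obtain ⟨s', t', θ', hs', hst', ht', hθ'⟩ := exists_isRowCoord Λ C hCind.2
  have hAE := hθ.nonempty_linearEquiv hXA (E s t) (hE s t hs hst ht)
  have hCE := hθ'.nonempty_linearEquiv hXC (E s' t') (hE s' t' hs' hst' ht')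
  have rows := isRankTwoExtension_rowLattice hXC hf hg (LinearMap.exact_iff.2 hexact.symm) hθ hθ'
  rcases rows.split_or_crossing prime_X dvd_or_exists_unit_dvd_sub hs hst ht hs' hst' ht' with
    ⟨w, hw, hwL⟩ | ⟨h₁, h₂, h₃, σ, hσ⟩ | ⟨h₁, h₂, h₃, σ, hσ⟩
  · exact absurd (exists_section hXB hXC hθ' hw hwL) hnonsplit
  · exact .inl ⟨s, s', t, t', hs, h₁, h₂, h₃, ht', hAE, nonempty_linearEquiv_prod hXB σ hσ
      (hE s t' hs (by omega) ht') (hE s' t hs' h₂ ht), hCE⟩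
  · exact .inr ⟨s', s, t', t, hs', h₁, h₂, h₃, ht, hAE, nonempty_linearEquiv_prod hXB σ hσ
      (hE s' s hs' h₁ (by omega)) (hE t' t (by omega) h₃ ht), hCE⟩
end
end

section
/- For any pairs 1 ≤ s < t ≤ n and 1 ≤ s' < t' ≤ n, the following are equivalent: (1) there exists a non-split short exact sequence of Λ-modules 0 → (s',t') → E → (s,t) → 0; (2) there exists a non-split short exact sequence of Λ-modules 0 → (s,t) → E → (s',t') → 0; (3) s < s' < t < t' or s' < s < t' < t (that is, the diagonals (P_s,P_t) and (P_{s'},P_{t'}) of the convex n-gon are crossing). -/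
set_option synthInstance.maxHeartbeats 1000000
set_option maxHeartbeats 1000000

open Polynomial Matrix

noncomputable section

/-- There exists a non-split short exact sequence of `Λ`-modules `0 → Z → B → W → 0`. -/
def ExistsNonSplitExt {K : Type} [Field K] {n : ℕ}
    {Λ : Subalgebra (Polynomial K) (Matrix (Fin n) (Fin n) (RatFunc K))}
    (Z W : Submodule ↥Λ (Fin n → RatFunc K)) : Prop :=
  ∃ (B : ModuleCat.{0} ↥Λ) (f : ↥Z →ₗ[↥Λ] B) (g : B →ₗ[↥Λ] ↥W),
    Function.Injective f ∧ Function.Surjective g ∧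
    LinearMap.range f = LinearMap.ker g ∧
    ¬ ∃ sec : ↥W →ₗ[↥Λ] B, g ∘ₗ sec = LinearMap.id

/-!
Let `P_a = Λ e_a` be the `a`-th column of `Λ`, a projective module. Then `(s, t) = P_s + x P_t`, so
`0 → P_s ∩ x P_t → P_s × x P_t → (s, t) → 0` is a projective presentation, and `Ext¹((s, t), Z)` is
the cokernel of `Hom(P_s, Z) × Hom(x P_t, Z) → Hom(P_s ∩ x P_t, Z)`. Every homomorphism between
these submodules of `K(x)^n` is multiplication by a scalar, so the three groups of homomorphisms are
fractional ideals `x^c K[x]`, and the cokernel is nonzero iff the exponent for `P_s ∩ x P_t` is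
strictly smaller than the other two. Now the syzygy `P_s ∩ x P_t` is the rotated diagonal `x (s + 1,
t + 1)`, or `(1, s + 1)` when `t = n`, and for `Z = (s', t')` these inequalities between exponents
say that the two diagonals cross.
-/

universe u v w

section SplittingCriterion

variable {R A P W Z B : Type*} [Ring R] [AddCommGroup A] [Module R A] [AddCommGroup P] [Module R P]
  [AddCommGroup W] [Module R W] [AddCommGroup Z] [Module R Z] [AddCommGroup B] [Module R B]

theorem exists_section_of_forall_exists_extend [Module.Projective R P]
    {i : A →ₗ[R] P} {π : P →ₗ[R] W} (hiπ : Function.Exact i π) (hπ : Function.Surjective π)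
    {f : Z →ₗ[R] B} {g : B →ₗ[R] W} (hf : Function.Injective f) (hg : Function.Surjective g)
    (hfg : Function.Exact f g) (hext : ∀ φ : A →ₗ[R] Z, ∃ ψ : P →ₗ[R] Z, ψ ∘ₗ i = φ) :
    ∃ σ : W →ₗ[R] B, g ∘ₗ σ = LinearMap.id := by
  obtain ⟨l, hl⟩ := Module.projective_lifting_property g π hg
  have hgl (p : P) : g (l p) = π p := LinearMap.congr_fun hl p
  have hli (a : A) : l (i a) ∈ LinearMap.range f :=
    (hfg _).1 ((hgl _).trans (hiπ.apply_apply_eq_zero a))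
  obtain ⟨ψ, hψ⟩ := hext ((LinearEquiv.ofInjective f hf).symm ∘ₗ (l ∘ₗ i).codRestrict _ hli)
  have hvanish : LinearMap.range i ≤ LinearMap.ker (l - f ∘ₗ ψ) := by
    rintro _ ⟨a, rfl⟩
    have hψa : f (ψ (i a)) = l (i a) := by
      rw [← LinearMap.comp_apply ψ i, hψ]
      exact congrArg Subtype.val ((LinearEquiv.ofInjective f hf).apply_symm_apply ⟨_, hli a⟩)
    simp [hψa]
  refine ⟨(LinearMap.range i).liftQ _ hvanish ∘ₗ (hiπ.linearEquivOfSurjective hπ).symm,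
    LinearMap.ext fun w => ?_⟩
  obtain ⟨p, rfl⟩ := hπ w
  simp [hgl, hfg.apply_apply_eq_zero]

theorem exists_extend_of_exists_section {i : A →ₗ[R] P} {φ : A →ₗ[R] Z} {f : Z →ₗ[R] B}
    {g : B →ₗ[R] W} {j : P →ₗ[R] B} (hf : Function.Injective f) (hfg : Function.Exact f g)
    (hj : ∀ a, f (φ a) = j (i a)) (hσ : ∃ σ : W →ₗ[R] B, g ∘ₗ σ = LinearMap.id) :
    ∃ ψ : P →ₗ[R] Z, ψ ∘ₗ i = φ := by
  obtain ⟨-, r, hr⟩ : Function.Surjective g ∧ ∃ r, r ∘ₗ f = LinearMap.id :=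
    (hfg.split_tfae'.out 0 1).1 (And.intro hf hσ)
  refine ⟨r ∘ₗ j, LinearMap.ext fun a => ?_⟩
  calc r (j (i a)) = r (f (φ a)) := by rw [hj]
    _ = φ a := LinearMap.congr_fun hr (φ a)

/-- The pushout of `φ : A → Z` and `i : A → P`, encoded as the quotient of `Z × P` by the
elements `(φ a, -i a)`. -/
abbrev ModulePushout (φ : A →ₗ[R] Z) (i : A →ₗ[R] P) : Type _ :=
  (Z × P) ⧸ LinearMap.range (φ.prod (-i))

namespace ModulePushout

variable {φ : A →ₗ[R] Z} {i : A →ₗ[R] P} {π : P →ₗ[R] W}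

variable (φ i) in
/-- The canonical map from the first factor to the pushout. -/
def inl : Z →ₗ[R] ModulePushout φ i := Submodule.mkQ _ ∘ₗ LinearMap.inl R Z P

variable (φ i) in
/-- The canonical map from the second factor to the pushout. -/
def inr : P →ₗ[R] ModulePushout φ i := Submodule.mkQ _ ∘ₗ LinearMap.inr R Z P

theorem inl_apply_eq_inr_apply (a : A) : inl φ i (φ a) = inr φ i (i a) :=
  (Submodule.Quotient.eq _).2 ⟨a, by simp⟩

/-- The map from the pushout to the cokernel `π` of `i`, which vanishes on `Z`. -/
def toCokernel (h : Function.Exact i π) : ModulePushout φ i →ₗ[R] W :=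
  (LinearMap.range (φ.prod (-i))).liftQ (π ∘ₗ LinearMap.snd R Z P) (by
    rintro _ ⟨a, rfl⟩
    simp [h.apply_apply_eq_zero])

theorem inl_injective (hi : Function.Injective i) : Function.Injective (inl φ i) := by
  refine (injective_iff_map_eq_zero _).2 fun z hz => ?_
  obtain ⟨a, ha⟩ := (Submodule.Quotient.mk_eq_zero _).1 hz
  obtain ⟨rfl, hia⟩ := Prod.ext_iff.1 ha
  have ha0 : a = 0 := (injective_iff_map_eq_zero i).1 hi a (neg_eq_zero.1 hia)
  simp [ha0]

theorem toCokernel_surjective (h : Function.Exact i π) (hπ : Function.Surjective π) :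
    Function.Surjective (toCokernel (φ := φ) h) := fun w => by
  obtain ⟨p, rfl⟩ := hπ w
  exact ⟨inr φ i p, rfl⟩

theorem exact_inl_toCokernel (h : Function.Exact i π) :
    Function.Exact (inl φ i) (toCokernel h) := by
  intro b
  constructor
  · obtain ⟨⟨z, p⟩, rfl⟩ := Submodule.mkQ_surjective _ b
    intro hp
    obtain ⟨a, rfl⟩ := (h p).1 hp
    refine ⟨z + φ a, ?_⟩
    rw [map_add, inl_apply_eq_inr_apply, inl, inr, LinearMap.comp_apply, LinearMap.comp_apply,
      ← map_add]
    simp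
  · rintro ⟨z, rfl⟩
    exact map_zero π

end ModulePushout

theorem exists_nonsplit_iff_exists_not_extend {R : Type u} {A : Type w} {P W Z : Type v} [Ring R]
    [AddCommGroup A] [Module R A] [AddCommGroup P] [Module R P] [AddCommGroup W] [Module R W]
    [AddCommGroup Z] [Module R Z] [Module.Projective R P] {i : A →ₗ[R] P} {π : P →ₗ[R] W}
    (hi : Function.Injective i) (hiπ : Function.Exact i π) (hπ : Function.Surjective π) :
    (∃ (B : ModuleCat.{v} R) (f : Z →ₗ[R] B) (g : B →ₗ[R] W), Function.Injective f ∧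
        Function.Surjective g ∧ LinearMap.range f = LinearMap.ker g ∧
        ¬ ∃ sec : W →ₗ[R] B, g ∘ₗ sec = LinearMap.id) ↔
      ∃ φ : A →ₗ[R] Z, ¬ ∃ ψ : P →ₗ[R] Z, ψ ∘ₗ i = φ := by
  constructor
  · rintro ⟨B, f, g, hf, hg, hfg, hsplit⟩
    contrapose! hsplit
    exact exists_section_of_forall_exists_extend hiπ hπ hf hg
      (LinearMap.exact_iff.2 hfg.symm) hsplit
  · rintro ⟨φ, hφ⟩
    have hf := ModulePushout.inl_injective (φ := φ) hi
    have hfg := ModulePushout.exact_inl_toCokernel (φ := φ) hiπ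
    exact ⟨ModuleCat.of R (ModulePushout φ i), ModulePushout.inl φ i, ModulePushout.toCokernel hiπ,
      hf, ModulePushout.toCokernel_surjective hiπ hπ, hfg.linearMap_ker_eq.symm, fun hσ =>
        hφ (exists_extend_of_exists_section hf hfg ModulePushout.inl_apply_eq_inr_apply hσ)⟩

section InfSup

variable (L M : Submodule R W)

/-- The diagonal embedding `L ∩ M → L × M`. -/
def infToProd : ↥(L ⊓ M) →ₗ[R] L × M :=
  (Submodule.inclusion inf_le_left).prod (Submodule.inclusion inf_le_right)

/-- The difference map `L × M → L + M`; the sign makes its kernel the diagonal `L ∩ M`. -/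
def prodToSup : L × M →ₗ[R] ↥(L ⊔ M) :=
  (Submodule.inclusion le_sup_left).coprod (-Submodule.inclusion le_sup_right)

theorem infToProd_injective : Function.Injective (infToProd L M) := fun _ _ h =>
  Subtype.ext (congrArg (fun x : L × M => (x.1 : W)) h)

theorem coe_prodToSup_apply (x : L × M) : (prodToSup L M x : W) = x.1 - x.2 := by
  simp [prodToSup, sub_eq_add_neg]

theorem prodToSup_surjective : Function.Surjective (prodToSup L M) := by
  rintro ⟨w, hw⟩
  obtain ⟨y, hy, z, hz, rfl⟩ := Submodule.mem_sup.1 hw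
  exact ⟨(⟨y, hy⟩, -⟨z, hz⟩), Subtype.ext (by simp [coe_prodToSup_apply])⟩

theorem exact_infToProd_prodToSup : Function.Exact (infToProd L M) (prodToSup L M) := by
  rintro ⟨⟨y, hy⟩, ⟨z, hz⟩⟩
  rw [← Submodule.coe_eq_zero, coe_prodToSup_apply, sub_eq_zero]
  constructor
  · rintro (rfl : y = z)
    exact ⟨⟨y, hy, hz⟩, rfl⟩
  · rintro ⟨u, hu⟩
    obtain ⟨h₁, h₂⟩ := Prod.ext_iff.1 hu
    exact (congrArg Subtype.val h₁).symm.trans (congrArg Subtype.val h₂)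

end InfSup

end SplittingCriterion

section PowerLattices

variable {K : Type*} [Field K]

variable (K) in
/-- `x^c · K[x]` as an additive subgroup of `K(x)`. -/
def xPowAddSubgroup (c : ℤ) : AddSubgroup (RatFunc K) where
  carrier := xPow K c
  zero_mem' := ⟨0, by simp⟩
  add_mem' := by
    rintro _ _ ⟨p, rfl⟩ ⟨q, rfl⟩
    exact ⟨p + q, by rw [map_add, mul_add]⟩
  neg_mem' := by
    rintro _ ⟨p, rfl⟩
    exact ⟨-p, by rw [map_neg, mul_neg]⟩

@[simp]
theorem mem_xPowAddSubgroup {c : ℤ} {f : RatFunc K} : f ∈ xPowAddSubgroup K c ↔ f ∈ xPow K c :=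
  Iff.rfl

theorem zero_mem_xPow (c : ℤ) : (0 : RatFunc K) ∈ xPow K c :=
  (xPowAddSubgroup K c).zero_mem

theorem mul_mem_xPow {c d : ℤ} {f g : RatFunc K} (hf : f ∈ xPow K c) (hg : g ∈ xPow K d) :
    f * g ∈ xPow K (c + d) := by
  obtain ⟨p, rfl⟩ := hf
  obtain ⟨q, rfl⟩ := hg
  exact ⟨p * q, by rw [zpow_add₀ RatFunc.X_ne_zero, map_mul]; ring⟩

theorem X_zpow_mem_xPow_iff {c m : ℤ} : (RatFunc.X ^ m : RatFunc K) ∈ xPow K c ↔ c ≤ m := by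
  constructor
  · rintro ⟨p, hp⟩
    by_contra! hlt
    obtain ⟨k, rfl⟩ := Int.le.dest (Int.add_one_le_of_lt hlt)
    have hunit : (1 : RatFunc K) =
        algebraMap K[X] (RatFunc K) (Polynomial.X * (Polynomial.X ^ k * p)) := by
      refine mul_left_cancel₀ (zpow_ne_zero m RatFunc.X_ne_zero) ?_
      rw [mul_one, map_mul, map_mul, map_pow, RatFunc.algebraMap_X]
      nth_rw 1 [hp]
      rw [zpow_add₀ RatFunc.X_ne_zero, zpow_add₀ RatFunc.X_ne_zero, zpow_one, zpow_natCast]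
      ring
    rw [← map_one (algebraMap K[X] (RatFunc K))] at hunit
    exact Polynomial.not_isUnit_X
      (IsUnit.of_mul_eq_one _ (RatFunc.algebraMap_injective K hunit).symm)
  · intro h
    obtain ⟨k, rfl⟩ := Int.le.dest h
    exact ⟨Polynomial.X ^ k, by
      rw [zpow_add₀ RatFunc.X_ne_zero, map_pow, RatFunc.algebraMap_X, zpow_natCast]⟩

theorem xPowAddSubgroup_antitone : Antitone (xPowAddSubgroup K) := by
  rintro c d h _ ⟨p, rfl⟩
  have hp : algebraMap K[X] (RatFunc K) p ∈ xPow K 0 := ⟨p, by simp⟩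
  simpa using mul_mem_xPow (X_zpow_mem_xPow_iff.2 h) hp

theorem mul_X_zpow_mem_xPow_iff {c m : ℤ} {f : RatFunc K} :
    f * RatFunc.X ^ m ∈ xPow K c ↔ f ∈ xPow K (c - m) := by
  constructor <;> intro h
  · have hX : (RatFunc.X ^ m : RatFunc K) ≠ 0 := zpow_ne_zero m RatFunc.X_ne_zero
    simpa [hX, sub_eq_add_neg] using mul_mem_xPow h (X_zpow_mem_xPow_iff.2 (le_refl (-m)))
  · simpa using mul_mem_xPow h (X_zpow_mem_xPow_iff.2 (le_refl m))

theorem iInf_xPowAddSubgroup_le_iff {ι : Sort*} {f : ι → ℤ} {c : ℤ} :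
    ⨅ k, xPowAddSubgroup K (f k) ≤ xPowAddSubgroup K c ↔ ∃ k, c ≤ f k := by
  constructor
  · contrapose!
    intro h hle
    have hmem : (RatFunc.X ^ (c - 1) : RatFunc K) ∈ ⨅ k, xPowAddSubgroup K (f k) :=
      AddSubgroup.mem_iInf.2 fun k => X_zpow_mem_xPow_iff.2 (Int.le_sub_one_of_lt (h k))
    have := X_zpow_mem_xPow_iff.1 (hle hmem)
    omega
  · rintro ⟨k, hk⟩
    exact (iInf_le _ k).trans (xPowAddSubgroup_antitone hk)

theorem exists_ne_zero_mem_xPow_mul_mem_xPow (f : RatFunc K) (c d : ℤ) :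
    ∃ q : RatFunc K, q ≠ 0 ∧ q ∈ xPow K c ∧ q * f ∈ xPow K d := by
  have hden : algebraMap K[X] (RatFunc K) f.denom ≠ 0 :=
    RatFunc.algebraMap_ne_zero f.denom_ne_zero
  refine ⟨RatFunc.X ^ max c d * algebraMap K[X] (RatFunc K) f.denom,
    mul_ne_zero (zpow_ne_zero _ RatFunc.X_ne_zero) hden,
    xPowAddSubgroup_antitone (le_max_left c d) ⟨f.denom, rfl⟩,
    xPowAddSubgroup_antitone (le_max_right c d) ⟨f.num, ?_⟩⟩
  rw [mul_assoc, mul_comm (algebraMap _ _ _) f, ← (div_eq_iff hden).1 (RatFunc.num_div_denom f)]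

end PowerLattices

section ScalarHom

variable {K : Type*} [Field K] {n : ℕ}
  {Λ : Subalgebra K[X] (Matrix (Fin n) (Fin n) (RatFunc K))}

theorem smul_eq_coe_mulVec (M : Λ) (v : Fin n → RatFunc K) :
    M • v = (M : Matrix (Fin n) (Fin n) (RatFunc K)) *ᵥ v :=
  rfl

instance smulCommClass_ratFunc_subalgebra :
    SMulCommClass (RatFunc K) Λ (Fin n → RatFunc K) where
  smul_comm p M v := by
    rw [smul_eq_coe_mulVec, smul_eq_coe_mulVec, Matrix.mulVec_smul]

/-- The additive group `(Z : L)` of the scalars `p ∈ K(x)` with `p L ⊆ Z`. -/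
def scalarColon (Z L : Submodule Λ (Fin n → RatFunc K)) : AddSubgroup (RatFunc K) where
  carrier := {p | ∀ u ∈ L, p • u ∈ Z}
  zero_mem' u _ := by simp
  add_mem' hp hq u hu := by simpa only [add_smul] using Z.add_mem (hp u hu) (hq u hu)
  neg_mem' hp u hu := by simpa only [neg_smul] using Z.neg_mem (hp u hu)

theorem mem_scalarColon {Z L : Submodule Λ (Fin n → RatFunc K)} {p : RatFunc K} :
    p ∈ scalarColon Z L ↔ ∀ u ∈ L, p • u ∈ Z :=
  Iff.rfl

/-- Multiplication by a scalar in `(Z : L)`, as a `Λ`-linear map `L → Z`. -/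
def scalarHom {Z L : Submodule Λ (Fin n → RatFunc K)} (p : scalarColon Z L) : L →ₗ[Λ] Z :=
  (DistribSMul.toLinearMap Λ (Fin n → RatFunc K) (p : RatFunc K)).restrict p.2

@[simp]
theorem coe_scalarHom_apply {Z L : Submodule Λ (Fin n → RatFunc K)} (p : scalarColon Z L) (u : L) :
    (scalarHom p u : Fin n → RatFunc K) = (p : RatFunc K) • (u : Fin n → RatFunc K) :=
  rfl

end ScalarHom

section TiledOrder

variable {K : Type*} [Field K] {n : ℕ}
  {Λ : Subalgebra K[X] (Matrix (Fin n) (Fin n) (RatFunc K))} {e : Fin n → Fin n → ℤ}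

/-- `Λ` is the tiled order with exponent matrix `e`: the `(i, j)` entries of its elements range over
`x^(e i j) · K[x]`. -/
def IsTiledOrder_s9 (Λ : Subalgebra K[X] (Matrix (Fin n) (Fin n) (RatFunc K)))
    (e : Fin n → Fin n → ℤ) : Prop :=
  ∀ M, M ∈ Λ ↔ ∀ i j, M i j ∈ xPow K (e i j)

/-- `L` is the full lattice with exponent vector `d`: the `k`-th coordinates of its elements range
over `x^(d k) · K[x]`. -/
def HasExponents (L : Submodule Λ (Fin n → RatFunc K)) (d : Fin n → ℤ) : Prop :=
  ∀ v, v ∈ L ↔ ∀ k, v k ∈ xPow K (d k)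

/-- The `Λ`-submodule generated by `x^m e_a`. Over a tiled order it is the column `Λ E_{aa}`
rescaled by `x^m`, hence projective. -/
def columnModule (Λ : Subalgebra K[X] (Matrix (Fin n) (Fin n) (RatFunc K))) (a : Fin n) (m : ℤ) :
    Submodule Λ (Fin n → RatFunc K) :=
  Submodule.span Λ {Pi.single a (RatFunc.X ^ m)}

namespace HasExponents

variable {L M Z : Submodule Λ (Fin n → RatFunc K)} {d d' : Fin n → ℤ}

theorem single_mem_iff (hL : HasExponents L d) {k : Fin n} {f : RatFunc K} :
    Pi.single k f ∈ L ↔ f ∈ xPow K (d k) := by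
  rw [hL]
  refine ⟨fun h => by simpa using h k, fun hf l => ?_⟩
  obtain rfl | hlk := eq_or_ne l k
  · simpa using hf
  · simpa [hlk] using zero_mem_xPow (d l)

theorem ne_bot (hL : HasExponents L d) (k : Fin n) : L ≠ ⊥ := by
  refine (Submodule.ne_bot_iff L).2
    ⟨Pi.single k (RatFunc.X ^ d k), hL.single_mem_iff.2 (X_zpow_mem_xPow_iff.2 le_rfl), ?_⟩
  simp [zpow_ne_zero (d k) (RatFunc.X_ne_zero (K := K))]

theorem inf (hL : HasExponents L d) (hM : HasExponents M d') :
    HasExponents (L ⊓ M) fun k => max (d k) (d' k) := fun v => by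
  simp only [Submodule.mem_inf, hL v, hM v, ← forall_and, ← mem_xPowAddSubgroup,
    xPowAddSubgroup_antitone.map_sup, AddSubgroup.mem_inf]

theorem sup (hL : HasExponents L d) (hM : HasExponents M d') :
    HasExponents (L ⊔ M) fun k => min (d k) (d' k) := fun v => by
  simp only [← mem_xPowAddSubgroup, xPowAddSubgroup_antitone.map_inf]
  constructor
  · intro hv k
    obtain ⟨y, hy, z, hz, rfl⟩ := Submodule.mem_sup.1 hv
    exact AddSubgroup.add_mem_sup ((hL y).1 hy k) ((hM z).1 hz k)
  · intro hv
    choose y hy z hz hyz using fun k => AddSubgroup.mem_sup.1 (hv k)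
    exact Submodule.mem_sup.2 ⟨y, (hL y).2 hy, z, (hM z).2 hz, funext hyz⟩

theorem unique (hL : HasExponents L d) (hM : HasExponents M d) : L = M :=
  Submodule.ext fun v => (hL v).trans (hM v).symm

theorem scalarColon_eq_iInf (hL : HasExponents L d) (hZ : HasExponents Z d') :
    scalarColon Z L = ⨅ k, xPowAddSubgroup K (d' k - d k) := by
  ext p
  rw [mem_scalarColon, AddSubgroup.mem_iInf]
  constructor
  · intro hp k
    have hpk := hp _ (hL.single_mem_iff.2 (X_zpow_mem_xPow_iff.2 (le_refl (d k))))
    rw [← Pi.single_smul, hZ.single_mem_iff, smul_eq_mul, mul_X_zpow_mem_xPow_iff] at hpk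
    exact hpk
  · intro hp u hu
    refine (hZ _).2 fun k => ?_
    simpa using mul_mem_xPow (hp k) ((hL u).1 hu k)

theorem scalarColon_columnModule (hZ : HasExponents Z d) (a : Fin n) (m : ℤ) :
    scalarColon Z (columnModule Λ a m) = xPowAddSubgroup K (d a - m) := by
  ext p
  rw [mem_xPowAddSubgroup, ← mul_X_zpow_mem_xPow_iff, ← hZ.single_mem_iff, ← smul_eq_mul,
    Pi.single_smul, mem_scalarColon]
  refine ⟨fun hp => hp _ (Submodule.mem_span_singleton_self _), fun hp u hu => ?_⟩
  obtain ⟨M, rfl⟩ := Submodule.mem_span_singleton.1 hu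
  rw [smul_comm]
  exact Z.smul_mem M hp

end HasExponents

namespace IsTiledOrder_s9

theorem single_mem (hΛ : IsTiledOrder_s9 Λ e) {i j : Fin n} {f : RatFunc K} (hf : f ∈ xPow K (e i j)) :
    Matrix.single i j f ∈ Λ := by
  refine (hΛ _).2 fun k l => ?_
  rw [Matrix.single_apply]
  split_ifs with h
  · rwa [← h.1, ← h.2]
  · exact zero_mem_xPow _

theorem vecMulVec_mem (hΛ : IsTiledOrder_s9 Λ e) {a : Fin n} {m : ℤ} {v : Fin n → RatFunc K}
    (hv : ∀ k, v k ∈ xPow K (e k a + m)) :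
    Matrix.vecMulVec v (Pi.single a (RatFunc.X ^ (-m))) ∈ Λ := by
  refine (hΛ _).2 fun k l => ?_
  rw [Matrix.vecMulVec_apply]
  obtain rfl | hl := eq_or_ne l a
  · simpa only [Pi.single_eq_same, mul_X_zpow_mem_xPow_iff, sub_neg_eq_add] using hv k
  · simpa [hl] using zero_mem_xPow (e k l)

end IsTiledOrder_s9

theorem vecMulVec_single_mulVec_single (v : Fin n → RatFunc K) (a : Fin n) (m : ℤ) :
    Matrix.vecMulVec v (Pi.single a (RatFunc.X ^ (-m))) *ᵥ Pi.single a (RatFunc.X ^ m) = v := by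
  have hX : (RatFunc.X ^ (-m) * RatFunc.X ^ m : RatFunc K) = 1 := by
    rw [← zpow_add₀ RatFunc.X_ne_zero, neg_add_cancel, zpow_zero]
  rw [Matrix.vecMulVec_mulVec, single_dotProduct, Pi.single_eq_same, hX, MulOpposite.op_one,
    one_smul]

namespace IsTiledOrder_s9

theorem hasExponents_columnModule (hΛ : IsTiledOrder_s9 Λ e) (a : Fin n) (m : ℤ) :
    HasExponents (columnModule Λ a m) fun k => e k a + m := by
  intro v
  rw [columnModule, Submodule.mem_span_singleton]
  constructor
  · rintro ⟨M, rfl⟩ k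
    rw [smul_eq_coe_mulVec, Matrix.mulVec_single]
    exact mul_mem_xPow ((hΛ _).1 M.2 k a) (X_zpow_mem_xPow_iff.2 le_rfl)
  · intro hv
    exact ⟨⟨_, hΛ.vecMulVec_mem hv⟩, vecMulVec_single_mulVec_single v a m⟩

theorem projective_columnModule (hΛ : IsTiledOrder_s9 Λ e) (a : Fin n) (m : ℤ) :
    Module.Projective Λ (columnModule Λ a m) := by
  let toMatrix : columnModule Λ a m →ₗ[Λ] Λ :=
    { toFun v := ⟨_, hΛ.vecMulVec_mem ((hΛ.hasExponents_columnModule a m _).1 v.2)⟩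
      map_add' u v := Subtype.ext (Matrix.add_vecMulVec _ _ _)
      map_smul' M v := Subtype.ext (Matrix.mul_vecMulVec M.1 v.1 _).symm }
  let generator : columnModule Λ a m := ⟨_, Submodule.mem_span_singleton_self _⟩
  refine Module.Projective.of_split toMatrix (LinearMap.toSpanSingleton Λ _ generator) ?_
  ext1 v
  exact Subtype.ext (vecMulVec_single_mulVec_single v.1 a m)

theorem scalarHom_surjective (hΛ : IsTiledOrder_s9 Λ e) (Z L : Submodule Λ (Fin n → RatFunc K)) :
    Function.Surjective (scalarHom : scalarColon Z L → L →ₗ[Λ] Z) := by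
  intro φ
  suffices h : ∃ p : RatFunc K, ∀ u : L, (φ u : Fin n → RatFunc K) = p • (u : Fin n → RatFunc K) by
    obtain ⟨p, hp⟩ := h
    exact ⟨⟨p, fun u hu => hp ⟨u, hu⟩ ▸ (φ ⟨u, hu⟩).2⟩,
      LinearMap.ext fun u => Subtype.ext (hp u).symm⟩
  obtain rfl | hL := eq_or_ne L ⊥
  · exact ⟨0, fun u => by simp [Subsingleton.elim u 0]⟩
  obtain ⟨w, hwL, hw⟩ := (Submodule.ne_bot_iff L).1 hL
  obtain ⟨j, hj⟩ := Function.ne_iff.1 hw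
  refine ⟨(φ ⟨w, hwL⟩ : Fin n → RatFunc K) j / w j, fun u => funext fun k => ?_⟩
  obtain ⟨q, hq, hqjk, hqjj⟩ := exists_ne_zero_mem_xPow_mul_mem_xPow
    ((u : Fin n → RatFunc K) k / w j) (e j k) (e j j)
  -- `q E_{jk} u = (q u_k / w_j) E_{jj} w`; apply `φ` to it.
  let M : Λ := ⟨_, hΛ.single_mem hqjk⟩
  let N : Λ := ⟨_, hΛ.single_mem hqjj⟩
  have hMN : M • u = N • (⟨w, hwL⟩ : L) := Subtype.ext <| by
    simp only [Submodule.coe_smul, smul_eq_coe_mulVec, M, N, Matrix.single_mulVec, mul_assoc]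
    rw [div_mul_cancel₀ _ hj]
  have hφ : (M • φ u : Z) = N • φ ⟨w, hwL⟩ := by rw [← map_smul, hMN, map_smul]
  have hφj := congrFun (congrArg Subtype.val hφ) j
  simp only [Submodule.coe_smul, smul_eq_coe_mulVec, M, N, Matrix.single_mulVec,
    Function.update_self, mul_assoc] at hφj
  rw [mul_left_cancel₀ hq hφj, Pi.smul_apply, smul_eq_mul]
  ring

end IsTiledOrder_s9

end TiledOrder

section NonSplitExtensions

variable {K : Type} [Field K] {n : ℕ}
  {Λ : Subalgebra K[X] (Matrix (Fin n) (Fin n) (RatFunc K))}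

theorem existsNonSplitExt_sup_iff_exists_not_extend
    (Z P Q : Submodule Λ (Fin n → RatFunc K)) [Module.Projective Λ P] [Module.Projective Λ Q] :
    ExistsNonSplitExt Z (P ⊔ Q) ↔
      ∃ φ : ↥(P ⊓ Q) →ₗ[Λ] Z, ¬ ∃ ψ : P × Q →ₗ[Λ] Z, ψ ∘ₗ infToProd P Q = φ :=
  exists_nonsplit_iff_exists_not_extend (R := Λ) (A := ↥(P ⊓ Q)) (P := P × Q) (W := ↥(P ⊔ Q))
    (Z := Z) (infToProd_injective (R := Λ) P Q) (exact_infToProd_prodToSup (R := Λ) P Q)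
    (prodToSup_surjective (R := Λ) P Q)

namespace IsTiledOrder_s9

variable {e : Fin n → Fin n → ℤ}

theorem existsNonSplitExt_sup_iff (hΛ : IsTiledOrder_s9 Λ e)
    {Z P Q : Submodule Λ (Fin n → RatFunc K)} [Module.Projective Λ P] [Module.Projective Λ Q]
    (hPQ : P ⊓ Q ≠ ⊥) :
    ExistsNonSplitExt Z (P ⊔ Q) ↔
      ¬ scalarColon Z (P ⊓ Q) ≤ scalarColon Z P ⊔ scalarColon Z Q := by
  rw [existsNonSplitExt_sup_iff_exists_not_extend, ← not_forall, not_iff_not]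
  constructor
  · intro hext p hp
    obtain ⟨ψ, hψ⟩ := hext (scalarHom ⟨p, hp⟩)
    obtain ⟨a, ha⟩ := hΛ.scalarHom_surjective Z P (ψ ∘ₗ LinearMap.inl Λ P Q)
    obtain ⟨b, hb⟩ := hΛ.scalarHom_surjective Z Q (ψ ∘ₗ LinearMap.inr Λ P Q)
    obtain ⟨u, hu, hu0⟩ := (Submodule.ne_bot_iff _).1 hPQ
    have hab : (p : RatFunc K) • u = ((a : RatFunc K) + b) • u :=
      calc p • u = (ψ (infToProd P Q ⟨u, hu⟩) : Fin n → RatFunc K) := by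
            rw [← LinearMap.comp_apply, hψ]
            rfl
        _ = ((scalarHom a ⟨u, hu.1⟩ + scalarHom b ⟨u, hu.2⟩ : Z) : Fin n → RatFunc K) := by
          rw [ha, hb, LinearMap.comp_apply, LinearMap.comp_apply, ← map_add]
          simp [infToProd, Submodule.inclusion_apply]
        _ = (a + b : RatFunc K) • u := (add_smul (a : RatFunc K) b u).symm
    rw [smul_left_injective _ hu0 hab]
    exact AddSubgroup.add_mem_sup a.2 b.2
  · intro hle φ
    obtain ⟨p, rfl⟩ := hΛ.scalarHom_surjective Z (P ⊓ Q) φ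
    obtain ⟨a, ha, b, hb, hab⟩ := AddSubgroup.mem_sup.1 (hle p.2)
    refine ⟨(scalarHom ⟨a, ha⟩).coprod (scalarHom ⟨b, hb⟩),
      LinearMap.ext fun u => Subtype.ext ?_⟩
    rw [coe_scalarHom_apply, ← hab]
    exact (add_smul a b _).symm

theorem existsNonSplitExt_iff_forall_lt (hΛ : IsTiledOrder_s9 Λ e)
    {Z W : Submodule Λ (Fin n → RatFunc K)} {d : Fin n → ℤ} {a b : Fin n} {r s : ℤ}
    (hZ : HasExponents Z d) (hW : HasExponents W fun k => min (e k a + r) (e k b + s)) :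
    ExistsNonSplitExt Z W ↔
      ∀ k, d k - max (e k a + r) (e k b + s) < min (d a - r) (d b - s) := by
  have hP := hΛ.hasExponents_columnModule a r
  have hQ := hΛ.hasExponents_columnModule b s
  have := hΛ.projective_columnModule a r
  have := hΛ.projective_columnModule b s
  obtain rfl := hW.unique (hP.sup hQ)
  rw [hΛ.existsNonSplitExt_sup_iff ((hP.inf hQ).ne_bot a), (hP.inf hQ).scalarColon_eq_iInf hZ,
    hZ.scalarColon_columnModule, hZ.scalarColon_columnModule, ← xPowAddSubgroup_antitone.map_inf,
    iInf_xPowAddSubgroup_le_iff]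
  simp only [not_exists, not_le]

end IsTiledOrder_s9

end NonSplitExtensions

section PolygonOrder

variable {n : ℕ}

theorem dExp_eq_min_cExp {a b : Fin n} (hab : a < b) (k : Fin n) :
    dExp (a + 1) (b + 1) k = min (cExp n k a + 0) (cExp n k b + 1) := by
  grind [cExp, dExp]

theorem max_cExp_eq_dExp_add_one {a b : Fin n} (hab : a < b) (hb : (b : ℕ) + 1 < n) (k : Fin n) :
    max (cExp n k a + 0) (cExp n k b + 1) = dExp (a + 2) (b + 2) k + 1 := by
  grind [cExp, dExp]

theorem max_cExp_eq_dExp {a b : Fin n} (hab : a < b) (hb : (b : ℕ) + 1 = n) (k : Fin n) :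
    max (cExp n k a + 0) (cExp n k b + 1) = dExp 1 (a + 2) k := by
  grind [cExp, dExp]

theorem forall_dExp_sub_max_lt_iff_crossing {a b : Fin n} (hab : a < b) {s' t' : ℕ} (hs' : 1 ≤ s')
    (hst' : s' < t') (ht' : t' ≤ n) :
    (∀ k : Fin n, dExp s' t' k - max (cExp n k a + 0) (cExp n k b + 1) <
        min (dExp s' t' a - 0) (dExp s' t' b - 1)) ↔
      (a + 1 < s' ∧ s' < b + 1 ∧ b + 1 < t') ∨ (s' < a + 1 ∧ a + 1 < t' ∧ t' < b + 1) := by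
  -- `dExp s' t'` is monotone, so each difference is largest at the last index of a plateau of the
  -- rotated diagonal; the first two plateaus already force the diagonals to cross.
  obtain hb | hb := (Nat.succ_le_of_lt b.2).lt_or_eq
  · simp only [max_cExp_eq_dExp_add_one hab hb, lt_min_iff]
    constructor
    · intro h
      have h₁ := h ⟨a + 1, by omega⟩
      have h₂ := h ⟨b + 1, by omega⟩
      grind [dExp]
    · grind [dExp]
  · simp only [max_cExp_eq_dExp hab hb, lt_min_iff]
    constructor
    · intro h
      have h₁ := h ⟨a + 1, by omega⟩
      have h₂ := h ⟨0, by omega⟩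
      grind [dExp]
    · grind [dExp]

end PolygonOrder

theorem existsNonSplitExt_iff_crossing {K : Type} [Field K] {n : ℕ}
    {Λ : Subalgebra K[X] (Matrix (Fin n) (Fin n) (RatFunc K))} (hΛ : IsTiledOrder_s9 Λ (cExp n))
    {s t s' t' : ℕ} (hs : 1 ≤ s) (hst : s < t) (ht : t ≤ n) (hs' : 1 ≤ s') (hst' : s' < t')
    (ht' : t' ≤ n) {Z W : Submodule Λ (Fin n → RatFunc K)}
    (hZ : HasExponents Z fun k => dExp s' t' k) (hW : HasExponents W fun k => dExp s t k) :
    ExistsNonSplitExt Z W ↔ (s < s' ∧ s' < t ∧ t < t') ∨ (s' < s ∧ s < t' ∧ t' < t) := by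
  obtain ⟨a, rfl⟩ : ∃ a : Fin n, (a : ℕ) + 1 = s := ⟨⟨s - 1, by omega⟩, Nat.sub_add_cancel hs⟩
  obtain ⟨b, rfl⟩ : ∃ b : Fin n, (b : ℕ) + 1 = t :=
    ⟨⟨t - 1, by omega⟩, Nat.sub_add_cancel (hs.trans hst.le)⟩
  have hab : a < b := Nat.lt_of_succ_lt_succ hst
  simp only [dExp_eq_min_cExp hab] at hW
  exact (hΛ.existsNonSplitExt_iff_forall_lt hZ hW).trans
    (forall_dExp_sub_max_lt_iff_crossing hab hs' hst' ht')

/-- For pairs `1 ≤ s < t ≤ n` and `1 ≤ s' < t' ≤ n`, the following are equivalent: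
(1) there is a non-split short exact sequence `0 → (s',t') → E → (s,t) → 0`;
(2) there is a non-split short exact sequence `0 → (s,t) → E → (s',t') → 0`;
(3) `s < s' < t < t'` or `s' < s < t' < t`, i.e. the diagonals `(P_s,P_t)` and
`(P_{s'},P_{t'})` of the convex `n`-gon are crossing. -/
theorem statement9 (K : Type) [Field K] (n : ℕ) (hn : 3 ≤ n)
    (Λ : Subalgebra (Polynomial K) (Matrix (Fin n) (Fin n) (RatFunc K)))
    (hΛ : (Λ : Set (Matrix (Fin n) (Fin n) (RatFunc K))) = lambdaCarrier K n)
    (E : ℕ → ℕ → Submodule ↥Λ (Fin n → RatFunc K))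
    (hE : ∀ i j : ℕ, 1 ≤ i → i < j → j ≤ n →
      (E i j : Set (Fin n → RatFunc K)) = ijSet K n i j)
    (s t s' t' : ℕ) (hs : 1 ≤ s) (hst : s < t) (ht : t ≤ n)
    (hs' : 1 ≤ s') (hst' : s' < t') (ht' : t' ≤ n) :
    List.TFAE
      [ExistsNonSplitExt (E s' t') (E s t),
       ExistsNonSplitExt (E s t) (E s' t'),
       ((s < s' ∧ s' < t ∧ t < t') ∨ (s' < s ∧ s < t' ∧ t' < t))] := by
  have h₁ := existsNonSplitExt_iff_crossing (Set.ext_iff.1 hΛ) hs hst ht hs' hst' ht'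
    (Set.ext_iff.1 (hE s' t' hs' hst' ht')) (Set.ext_iff.1 (hE s t hs hst ht))
  have h₂ := existsNonSplitExt_iff_crossing (Set.ext_iff.1 hΛ) hs' hst' ht' hs hst ht
    (Set.ext_iff.1 (hE s t hs hst ht)) (Set.ext_iff.1 (hE s' t' hs' hst' ht'))
  tfae_have 1 ↔ 3 := h₁
  tfae_have 2 ↔ 3 := h₂.trans or_comm
  tfae_finish
end
end
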